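/- arXiv:math/0301260 — 2 statements merged into one kernel-verified Lean document; each statement's English description precedes it below -/
import Mathlib

section
/- There is a constant C > 0 such that for every Schwartz function g : ℝ³ → ℂ, the radial derivative ∂_r g(x) = (x/|x|) · ∇g(x) satisfies ‖∂_r g‖_{Ḣ^{−1/2}(ℝ³)} ≤ C ‖g‖_{Ḣ^{1/2}(ℝ³)}. -/
open MeasureTheory Real Complex Filter
open scoped FourierTransform ContDiff ENNReal

noncomputable section

abbrev E3 := EuclideanSpace ℝ (Fin 3)

/-- the `i`-th standard basis vector of `ℝ³`. -/
def e3 (i : Fin 3) : E3 := EuclideanSpace.single i (1 : ℝ)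

/-- the `i`-th spatial partial derivative. -/
def pd (g : E3 → ℂ) (i : Fin 3) (x : E3) : ℂ := fderiv ℝ g x (e3 i)

/-- the (spatial) Laplacian. -/
def lap (g : E3 → ℂ) (x : E3) : ℂ := ∑ i : Fin 3, fderiv ℝ (fun y => pd g i y) x (e3 i)

/-- the antiderivative `F(z) = ∫₀^z f(s) ds` of `f`. -/
def Fa (f : ℝ → ℝ) (z : ℝ) : ℝ := ∫ s in (0:ℝ)..z, f s

/-- `u` is a smooth decaying solution of the gNLS `i ∂ₜ u + α Δ u = μ f(|u|²) u`
on `[0,T] × ℝ³`: it is jointly smooth, every time derivative slice is a Schwartz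
function of `x`, and the equation holds pointwise on `[0,T] × ℝ³`. -/
structure IsSolution (α μ : ℝ) (f : ℝ → ℝ) (T : ℝ) (u : ℝ → E3 → ℂ) : Prop where
  smooth : ContDiff ℝ ∞ (fun p : ℝ × E3 => u p.1 p.2)
  schwartz : ∀ (k : ℕ) (t : ℝ), ∃ g : SchwartzMap E3 ℂ,
      ∀ x, iteratedDeriv k (fun s => u s x) t = g x
  eqn : ∀ t ∈ Set.Icc (0:ℝ) T, ∀ x : E3,
      Complex.I * deriv (fun s => u s x) t + (α : ℂ) * lap (u t) x
        = ((μ * f (Complex.normSq (u t x)) : ℝ) : ℂ) * u t x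

/-- the `i`-th component of the mass current `Im (conj u ∇u)`. -/
def massCur (g : E3 → ℂ) (i : Fin 3) (x : E3) : ℝ := ((starRingEnd ℂ) (g x) * pd g i x).im

/-- the Morawetz action centered at `y`. -/
def morAction (g : E3 → ℂ) (y : E3) : ℝ :=
  ∫ x : E3, ∑ i : Fin 3, massCur g i x * ((x i - y i) / ‖x - y‖)

/-- `|∇̸_y g(x)|²`, the squared norm of the angular part of the gradient. -/
def angGradSq (g : E3 → ℂ) (y x : E3) : ℝ :=
  ∑ i : Fin 3, Complex.normSq (pd g i x -
    (((x i - y i) / ‖x - y‖ : ℝ) : ℂ) *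
      ∑ j : Fin 3, (((x j - y j) / ‖x - y‖ : ℝ) : ℂ) * pd g j x)

/-- squared homogeneous Sobolev norm `‖g‖²_{Ḣ^σ}`. -/
def sobSq (σ : ℝ) (g : E3 → ℂ) : ℝ := ∫ ξ : E3, ‖ξ‖ ^ (2 * σ) * ‖𝓕 g ξ‖ ^ 2

/-!
Pair `∂_r g` with `𝓕 ψ` for a Schwartz function `ψ`. By Plancherel the pairing is at most
`‖∇g‖ ‖𝓕 ψ‖`, and moving the derivative onto `𝓕 ψ` it is at most a multiple of `‖g‖ ‖∇(𝓕 ψ)‖`: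
integrate by parts against the smooth field `x / √(|x|² + ε)`, whose divergence is `O(1 / |x|)` and
is therefore absorbed by Hardy's inequality in dimension at least three. Interpolating between the
two bounds by splitting a function with weights of the form `t / (t + |ξ|²)`, duality gives
`∫ |𝓕(∂_r g)|² / (t + |ξ|²) ≤ C ∫ |ξ|² |𝓕 g|² / (t + |ξ|²)` for every `t > 0`, and integrating
against `t ^ (σ - 1) dt` turns the resolvent weight `1 / (t + |ξ|²)` into a multiple of
`|ξ| ^ (2 (σ - 1))`.
-/

open scoped SchwartzMap
open Module (finrank)

theorem integral_mul_le_sqrt_integral_sq {α : Type*} [MeasurableSpace α] {μ : Measure α}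
    {u v : α → ℝ} (hu₀ : 0 ≤ u) (hv₀ : 0 ≤ v) (hu : MemLp u 2 μ) (hv : MemLp v 2 μ) :
    ∫ x, u x * v x ∂μ ≤ √(∫ x, u x ^ 2 ∂μ) * √(∫ x, v x ^ 2 ∂μ) := by
  have h := integral_mul_le_Lp_mul_Lq_of_nonneg Real.HolderConjugate.two_two
    (Eventually.of_forall hu₀) (Eventually.of_forall hv₀) (by simpa using hu) (by simpa using hv)
  simpa only [Real.rpow_two, ← Real.sqrt_eq_rpow] using h

section Gradient

variable {E F : Type*} [NormedAddCommGroup E] [InnerProductSpace ℝ E] [NormedAddCommGroup F]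

theorem norm_sq_clm_le_sum_norm_sq_apply [NormedSpace ℝ F] {ι : Type*} [Fintype ι]
    (b : OrthonormalBasis ι ℝ E) (L : E →L[ℝ] F) : ‖L‖ ^ 2 ≤ ∑ i, ‖L (b i)‖ ^ 2 := by
  rw [← Real.sq_sqrt (show 0 ≤ ∑ i, ‖L (b i)‖ ^ 2 by positivity)]
  gcongr
  refine L.opNorm_le_bound (Real.sqrt_nonneg _) fun v => ?_
  calc ‖L v‖ = ‖∑ i, b.repr v i • L (b i)‖ := by
        conv_lhs => rw [← b.sum_repr v]
        simp only [map_sum, map_smul]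
    _ ≤ ∑ i, ‖L (b i)‖ * ‖b.repr v i‖ := by
        refine (norm_sum_le _ _).trans_eq (Finset.sum_congr rfl fun i _ => ?_)
        rw [norm_smul, mul_comm]
    _ ≤ √(∑ i, ‖L (b i)‖ ^ 2) * √(∑ i, ‖b.repr v i‖ ^ 2) :=
        Real.sum_mul_le_sqrt_mul_sqrt _ _ _
    _ = √(∑ i, ‖L (b i)‖ ^ 2) * ‖v‖ := by
        rw [← EuclideanSpace.norm_eq, b.repr.norm_map]

variable [FiniteDimensional ℝ E] [MeasurableSpace E] [BorelSpace E]

theorem memLp_fderiv_schwartzMap [NormedSpace ℝ F] (f : 𝓢(E, F)) (p : ℝ≥0∞) :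
    MemLp (fderiv ℝ f) p :=
  (SchwartzMap.fderivCLM ℝ E F f).memLp p volume

theorem integrable_norm_sq_schwartzMap [NormedSpace ℝ F] (f : 𝓢(E, F)) :
    Integrable fun x => ‖f x‖ ^ 2 :=
  (f.memLp 2).integrable_norm_pow two_ne_zero

theorem integrable_norm_rpow_mul_norm_sq_schwartzMap [NormedSpace ℝ F] (f : 𝓢(E, F)) {s : ℝ}
    (hs : 0 ≤ s) : Integrable fun x => ‖x‖ ^ s * ‖f x‖ ^ 2 := by
  obtain ⟨k, hk⟩ := exists_nat_ge s
  obtain ⟨C, -, hC⟩ := f.decay 0 0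
  have hbound : Integrable fun x => C * (‖f x‖ + ‖x‖ ^ k * ‖f x‖) :=
    (f.integrable.norm.add (f.integrable_pow_mul volume k)).const_mul C
  refine hbound.mono' (by fun_prop (disch := assumption)) (Eventually.of_forall fun x => ?_)
  have hpow : ‖x‖ ^ s ≤ 1 + ‖x‖ ^ k := by
    rcases le_total ‖x‖ 1 with h | h
    · exact (Real.rpow_le_one (norm_nonneg x) h hs).trans (by simp)
    · rw [← Real.rpow_natCast]
      exact (Real.rpow_le_rpow_of_exponent_le h hk).trans (by simp)
  have hfx : ‖f x‖ ≤ C := by simpa using hC x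
  rw [Real.norm_of_nonneg (by positivity)]
  calc ‖x‖ ^ s * ‖f x‖ ^ 2 ≤ (1 + ‖x‖ ^ k) * (C * ‖f x‖) := by
        rw [sq]; gcongr
    _ = C * (‖f x‖ + ‖x‖ ^ k * ‖f x‖) := by ring

variable [InnerProductSpace ℂ F] [CompleteSpace F]

theorem integral_norm_fderiv_sq_le (g : 𝓢(E, F)) :
    ∫ x, ‖fderiv ℝ g x‖ ^ 2 ≤ (2 * π) ^ 2 * ∫ ξ, ‖ξ‖ ^ 2 * ‖𝓕 g ξ‖ ^ 2 := by
  let b := stdOrthonormalBasis ℝ E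
  have htg (i) : (inner ℝ · (b i) : E → ℝ).HasTemperateGrowth := by fun_prop
  let Dg (i) : 𝓢(E, F) := LineDeriv.lineDerivOp (b i) g
  have hDg (i) (ξ : E) : ‖𝓕 (Dg i) ξ‖ ^ 2 = (2 * π) ^ 2 * (inner ℝ ξ (b i) ^ 2 * ‖𝓕 g ξ‖ ^ 2) := by
    rw [SchwartzMap.fourier_lineDerivOp_eq]
    simp [SchwartzMap.smulLeftCLM_apply_apply (htg i), norm_smul, mul_pow, abs_of_pos Real.pi_pos]
  calc ∫ x, ‖fderiv ℝ g x‖ ^ 2 ≤ ∫ x, ∑ i, ‖Dg i x‖ ^ 2 :=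
        integral_mono ((memLp_fderiv_schwartzMap g 2).integrable_norm_pow two_ne_zero)
          (integrable_finsetSum _ fun i _ => integrable_norm_sq_schwartzMap (Dg i))
          fun x => norm_sq_clm_le_sum_norm_sq_apply b _
    _ = ∫ ξ, ∑ i, ‖𝓕 (Dg i) ξ‖ ^ 2 := by
        rw [integral_finsetSum _ fun i _ => integrable_norm_sq_schwartzMap (Dg i),
          integral_finsetSum _ fun i _ => integrable_norm_sq_schwartzMap (𝓕 (Dg i))]
        simp only [SchwartzMap.integral_norm_sq_fourier]
    _ = (2 * π) ^ 2 * ∫ ξ, ‖ξ‖ ^ 2 * ‖𝓕 g ξ‖ ^ 2 := by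
        simp only [hDg, ← Finset.mul_sum, ← Finset.sum_mul, ← integral_const_mul,
          b.sum_sq_inner_left]

theorem integral_norm_fderiv_fourier_sq_le (f : 𝓢(E, F)) :
    ∫ x, ‖fderiv ℝ (𝓕 f : 𝓢(E, F)) x‖ ^ 2 ≤ (2 * π) ^ 2 * ∫ ξ, ‖ξ‖ ^ 2 * ‖f ξ‖ ^ 2 := by
  have hff (ξ : E) : 𝓕 (𝓕 f) ξ = f (-ξ) := by
    conv_rhs => rw [← FourierTransform.fourierInv_fourier_eq (E := 𝓢(E, F)) (F := 𝓢(E, F)) f]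
    rw [SchwartzMap.fourierInv_coe, Real.fourierInv_eq_fourier_neg, neg_neg,
      ← SchwartzMap.fourier_coe]
  refine (integral_norm_fderiv_sq_le (𝓕 f)).trans_eq ?_
  rw [← integral_neg_eq_self fun ξ : E => ‖ξ‖ ^ 2 * ‖f ξ‖ ^ 2]
  simp only [hff, norm_neg]

end Gradient

theorem norm_sq_add_rpow_le {E : Type*} [SeminormedAddCommGroup E] {ε p : ℝ} (hε : 0 < ε)
    (hp : p ≤ 0) (x : E) : (‖x‖ ^ 2 + ε) ^ p ≤ ε ^ p :=
  Real.rpow_le_rpow_of_nonpos hε (by linarith [sq_nonneg ‖x‖]) hp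

theorem norm_sq_add_rpow_sub_one_mul_norm_sq_le {E : Type*} [SeminormedAddCommGroup E] {ε : ℝ}
    (hε : 0 < ε) (p : ℝ) (x : E) :
    (‖x‖ ^ 2 + ε) ^ (p - 1) * ‖x‖ ^ 2 ≤ (‖x‖ ^ 2 + ε) ^ p := by
  have hs : 0 < ‖x‖ ^ 2 + ε := by positivity
  calc (‖x‖ ^ 2 + ε) ^ (p - 1) * ‖x‖ ^ 2 ≤ (‖x‖ ^ 2 + ε) ^ (p - 1) * (‖x‖ ^ 2 + ε) := by
        gcongr
        linarith
    _ = (‖x‖ ^ 2 + ε) ^ p := by rw [← Real.rpow_add_one hs.ne', sub_add_cancel]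

section RadialField

variable {E : Type*} [NormedAddCommGroup E] [InnerProductSpace ℝ E]

/-- The divergence of a vector field, as the trace of its derivative. -/
def divergence (V : E → E) (x : E) : ℝ := LinearMap.trace ℝ E (fderiv ℝ V x)

/-- The radial vector field `(|x|² + ε)^p x`, smooth for `ε > 0`. The exponent `p = -1/2`
regularizes the unit radial field `x/|x|`, and `p = -1` is the field behind Hardy's inequality. -/
def radialField (ε p : ℝ) (x : E) : E := (‖x‖ ^ 2 + ε) ^ p • x

theorem continuous_divergence [FiniteDimensional ℝ E] {V : E → E} (hV : ContDiff ℝ 1 V) :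
    Continuous (divergence V) :=
  (LinearMap.trace ℝ E ∘ₗ ContinuousLinearMap.coeLM ℝ).continuous_of_finiteDimensional.comp
    (hV.continuous_fderiv one_ne_zero)

theorem integral_fderiv_apply_eq_neg_integral_divergence_smul [FiniteDimensional ℝ E]
    [MeasurableSpace E] [BorelSpace E] {G : Type*} [NormedAddCommGroup G] [NormedSpace ℝ G]
    {V : E → E} {F : E → G} {A B : ℝ} (hV : ContDiff ℝ 1 V) (hA : ∀ x, ‖V x‖ ≤ A)
    (hB : ∀ x, ‖fderiv ℝ V x‖ ≤ B) (hF : Differentiable ℝ F) (hFi : Integrable F)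
    (hF'i : Integrable (fderiv ℝ F)) :
    ∫ x, fderiv ℝ F x (V x) = -∫ x, divergence V x • F x := by
  let b := stdOrthonormalBasis ℝ E
  let c (i) (x : E) : ℝ := inner ℝ (b i) (V x)
  have hc (i) (x : E) : HasFDerivAt (c i) (innerSL ℝ (b i) ∘L fderiv ℝ V x) x :=
    (innerSL ℝ (b i)).hasFDerivAt.comp x (hV.differentiable one_ne_zero x).hasFDerivAt
  have hc' (i) (x : E) : fderiv ℝ (c i) x (b i) = inner ℝ (b i) (fderiv ℝ V x (b i)) := by
    simp [(hc i x).fderiv]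
  have hcA (i) (x : E) : ‖c i x‖ ≤ A := by
    simpa using (norm_inner_le_norm (𝕜 := ℝ) (b i) (V x)).trans (by simpa using hA x)
  have hcB (i) (x : E) : ‖fderiv ℝ (c i) x (b i)‖ ≤ B := by
    rw [hc']
    refine (norm_inner_le_norm (𝕜 := ℝ) _ _).trans ?_
    simpa using ((fderiv ℝ V x).le_opNorm (b i)).trans (by simpa using hB x)
  have hcont (i) : Continuous (c i) := by fun_prop
  have hcont' (i) : Continuous fun x => fderiv ℝ (c i) x (b i) := by
    simp only [hc']
    fun_prop
  have hint (i) : Integrable fun x => c i x • fderiv ℝ F x (b i) :=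
    (hF'i.apply_continuousLinearMap _).bdd_smul A (hcont i).aestronglyMeasurable
      (Eventually.of_forall (hcA i))
  have hint' (i) : Integrable fun x => fderiv ℝ (c i) x (b i) • F x :=
    hFi.bdd_smul B (hcont' i).aestronglyMeasurable (Eventually.of_forall (hcB i))
  calc ∫ x, fderiv ℝ F x (V x) = ∫ x, ∑ i, c i x • fderiv ℝ F x (b i) := by
        refine integral_congr_ae (Eventually.of_forall fun x => ?_)
        simpa only [map_sum, map_smul] using congrArg (fderiv ℝ F x) (b.sum_repr' (V x)).symm
    _ = ∑ i, -∫ x, fderiv ℝ (c i) x (b i) • F x := by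
        rw [integral_finsetSum _ fun i _ => hint i]
        exact Finset.sum_congr rfl fun i _ =>
          integral_smul_fderiv_eq_neg_fderiv_smul_of_integrable (hint' i) (hint i)
            (hFi.bdd_smul A (hcont i).aestronglyMeasurable (Eventually.of_forall (hcA i)))
            (fun x _ => (hc i x).differentiableAt) fun x _ => hF x
    _ = -∫ x, divergence V x • F x := by
        rw [Finset.sum_neg_distrib, ← integral_finsetSum _ fun i _ => hint' i]
        simp only [hc', ← Finset.sum_smul, divergence, LinearMap.trace_eq_sum_inner _ b,
          ContinuousLinearMap.coe_coe]

variable {ε : ℝ} (hε : 0 < ε) (p : ℝ) (x : E)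
include hε

theorem contDiff_radialField : ContDiff ℝ 1 (radialField ε p : E → E) := by
  have hs (x : E) : ‖x‖ ^ 2 + ε ≠ 0 := by positivity
  exact (((contDiff_norm_sq ℝ).add contDiff_const).rpow_const_of_ne hs).smul contDiff_id

theorem hasFDerivAt_radialField : HasFDerivAt (radialField ε p)
    ((‖x‖ ^ 2 + ε) ^ p • ContinuousLinearMap.id ℝ E +
      ((2 * p * (‖x‖ ^ 2 + ε) ^ (p - 1)) • innerSL ℝ x).smulRight x) x := by
  have hs : HasFDerivAt (fun y : E => ‖y‖ ^ 2 + ε) (2 • innerSL ℝ x) x :=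
    (hasStrictFDerivAt_norm_sq x).hasFDerivAt.add_const ε
  convert! (hs.rpow_const (p := p) (Or.inl (by positivity))).smul (hasFDerivAt_id x) using 2
  ext v
  simp only [ContinuousLinearMap.smulRight_apply, smul_apply, coe_innerSL_apply,
    smul_eq_mul, id_eq, nsmul_eq_mul, Nat.cast_ofNat]
  module

theorem norm_radialField_le : ‖radialField ε p x‖ ≤ (‖x‖ ^ 2 + ε) ^ (p + 1 / 2) := by
  have hs : 0 < ‖x‖ ^ 2 + ε := by positivity
  rw [radialField, norm_smul, Real.norm_of_nonneg (by positivity), Real.rpow_add hs,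
    ← Real.sqrt_eq_rpow]
  gcongr
  exact Real.le_sqrt_of_sq_le (by linarith)

theorem norm_fderiv_radialField_le :
    ‖fderiv ℝ (radialField ε p) x‖ ≤ (1 + 2 * |p|) * (‖x‖ ^ 2 + ε) ^ p := by
  rw [(hasFDerivAt_radialField hε p x).fderiv]
  calc _ ≤ (‖x‖ ^ 2 + ε) ^ p + 2 * |p| * ((‖x‖ ^ 2 + ε) ^ (p - 1) * ‖x‖ ^ 2) := by
        refine (norm_add_le _ _).trans (add_le_add ?_ (le_of_eq ?_))
        · rw [norm_smul, Real.norm_of_nonneg (by positivity)]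
          exact mul_le_of_le_one_right (by positivity) ContinuousLinearMap.norm_id_le
        · rw [ContinuousLinearMap.norm_smulRight_apply, norm_smul, innerSL_apply_norm,
            norm_mul, norm_mul, Real.norm_eq_abs p, Real.norm_two,
            Real.norm_of_nonneg (by positivity)]
          ring
    _ ≤ (1 + 2 * |p|) * (‖x‖ ^ 2 + ε) ^ p := by
        linarith [mul_le_mul_of_nonneg_left (norm_sq_add_rpow_sub_one_mul_norm_sq_le hε p x)
          (show 0 ≤ 2 * |p| by positivity)]

theorem divergence_radialField [FiniteDimensional ℝ E] :
    divergence (radialField ε p) x =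
      finrank ℝ E * (‖x‖ ^ 2 + ε) ^ p + 2 * p * (‖x‖ ^ 2 + ε) ^ (p - 1) * ‖x‖ ^ 2 := by
  rw [divergence, (hasFDerivAt_radialField hε p x).fderiv]
  simp only [ContinuousLinearMap.toLinearMap_add, ContinuousLinearMap.toLinearMap_smul,
    ContinuousLinearMap.coe_id, ContinuousLinearMap.coe_smulRight, map_add, map_smul,
    LinearMap.trace_id, LinearMap.trace_smulRight, ContinuousLinearMap.toLinearMap_innerSL_apply,
    LinearMap.smul_apply, innerₛₗ_apply_apply, real_inner_self_eq_norm_sq, smul_eq_mul]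
  ring

theorem abs_divergence_radialField_le [FiniteDimensional ℝ E] :
    |divergence (radialField ε p) x| ≤ (finrank ℝ E + 2 * |p|) * (‖x‖ ^ 2 + ε) ^ p := by
  have hpow := norm_sq_add_rpow_sub_one_mul_norm_sq_le hε p x
  rw [divergence_radialField hε, add_mul]
  refine (abs_add_le _ _).trans (add_le_add (abs_of_nonneg (by positivity)).le ?_)
  rw [mul_assoc, abs_mul, abs_mul, abs_two, abs_of_nonneg (show 0 ≤ _ * ‖x‖ ^ 2 by positivity)]
  gcongr

variable [FiniteDimensional ℝ E] [MeasurableSpace E] [BorelSpace E]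

theorem integrable_divergence_radialField_smul {G : Type*} [NormedAddCommGroup G]
    [NormedSpace ℝ G] {F : E → G} {p : ℝ} (hp : p ≤ 0) (hF : Integrable F) :
    Integrable fun x => divergence (radialField ε p) x • F x := by
  refine hF.bdd_smul ((finrank ℝ E + 2 * |p|) * ε ^ p)
    (continuous_divergence (contDiff_radialField hε p)).aestronglyMeasurable
    (Eventually.of_forall fun x => (abs_divergence_radialField_le hε p x).trans ?_)
  exact mul_le_mul_of_nonneg_left (norm_sq_add_rpow_le hε hp x) (by positivity)

theorem integral_fderiv_radialField_eq {G : Type*} [NormedAddCommGroup G] [NormedSpace ℝ G]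
    {F : E → G} {p : ℝ} (hp : p ≤ -(1 / 2)) (hF : Differentiable ℝ F) (hFi : Integrable F)
    (hF'i : Integrable (fderiv ℝ F)) :
    ∫ x, fderiv ℝ F x (radialField ε p x) = -∫ x, divergence (radialField ε p) x • F x := by
  refine integral_fderiv_apply_eq_neg_integral_divergence_smul (contDiff_radialField hε p)
    (A := ε ^ (p + 1 / 2)) (B := (1 + 2 * |p|) * ε ^ p)
    (fun x => (norm_radialField_le hε p x).trans (norm_sq_add_rpow_le hε (by linarith) x))
    (fun x => (norm_fderiv_radialField_le hε p x).trans
      (mul_le_mul_of_nonneg_left (norm_sq_add_rpow_le hε (by linarith) x) (by positivity)))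
    hF hFi hF'i

end RadialField

section Hardy

variable {E : Type*} [NormedAddCommGroup E] [InnerProductSpace ℝ E] [FiniteDimensional ℝ E]

theorem sub_two_mul_inv_le_divergence_radialField {ε : ℝ} (hε : 0 < ε) (x : E) :
    (finrank ℝ E - 2) * (‖x‖ ^ 2 + ε)⁻¹ ≤ divergence (radialField ε (-1)) x := by
  rw [divergence_radialField hε, ← Real.rpow_neg_one]
  linarith [norm_sq_add_rpow_sub_one_mul_norm_sq_le hε (-1) x]

variable [MeasurableSpace E] [BorelSpace E]

theorem memLp_rpow_mul_norm_schwartzMap {F : Type*} [NormedAddCommGroup F] [NormedSpace ℝ F]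
    {ε p : ℝ} (hε : 0 < ε) (hp : p ≤ 0) (h : 𝓢(E, F)) :
    MemLp (fun x => (‖x‖ ^ 2 + ε) ^ p * ‖h x‖) 2 := by
  have hs (x : E) : ‖x‖ ^ 2 + ε ≠ 0 := by positivity
  have hcont : Continuous fun x : E => (‖x‖ ^ 2 + ε) ^ p :=
    (by fun_prop : Continuous fun x : E => ‖x‖ ^ 2 + ε).rpow_const fun x => Or.inl (hs x)
  refine (h.memLp 2).of_le_mul (c := ε ^ p) (by fun_prop) (Eventually.of_forall fun x => ?_)
  rw [norm_mul, norm_norm, Real.norm_of_nonneg (by positivity)]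
  gcongr ?_ * _
  exact norm_sq_add_rpow_le hε hp x

theorem integrable_fderiv_norm_sq_schwartzMap {F : Type*} [NormedAddCommGroup F]
    [InnerProductSpace ℝ F] (h : 𝓢(E, F)) : Integrable (fderiv ℝ fun y => ‖h y‖ ^ 2) := by
  have hint : Integrable fun x => 2 * (‖h x‖ * ‖fderiv ℝ h x‖) :=
    ((h.memLp 2).norm.integrable_mul (memLp_fderiv_schwartzMap h 2).norm).const_mul 2
  have hsmooth : ContDiff ℝ 1 fun y => ‖h y‖ ^ 2 := (h.smooth 1).norm_sq ℝ
  refine hint.mono' (hsmooth.continuous_fderiv one_ne_zero).aestronglyMeasurable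
    (Eventually.of_forall fun x => ?_)
  rw [h.differentiableAt.hasFDerivAt.norm_sq.fderiv, two_smul, two_mul]
  have hnorm : ‖innerSL ℝ (h x) ∘L fderiv ℝ h x‖ ≤ ‖h x‖ * ‖fderiv ℝ h x‖ := by
    simpa only [innerSL_apply_norm] using (innerSL ℝ (h x)).opNorm_comp_le (fderiv ℝ h x)
  exact norm_add_le_of_le hnorm hnorm

theorem sub_two_mul_integral_sq_le {F : Type*} [NormedAddCommGroup F] [InnerProductSpace ℝ F]
    {ε : ℝ} (hε : 0 < ε) (h : 𝓢(E, F)) :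
    (finrank ℝ E - 2) * ∫ x, ((‖x‖ ^ 2 + ε) ^ (-(1 / 2) : ℝ) * ‖h x‖) ^ 2 ≤
      2 * ∫ x, (‖x‖ ^ 2 + ε) ^ (-(1 / 2) : ℝ) * ‖h x‖ * ‖fderiv ℝ h x‖ := by
  have huL := memLp_rpow_mul_norm_schwartzMap hε (p := -(1 / 2)) (by norm_num) h
  have hsq (x : E) : ((‖x‖ ^ 2 + ε) ^ (-(1 / 2) : ℝ) * ‖h x‖) ^ 2 =
      (‖x‖ ^ 2 + ε)⁻¹ * ‖h x‖ ^ 2 := by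
    rw [mul_pow, ← Real.rpow_mul_natCast (by positivity)]
    norm_num [Real.rpow_neg_one]
  have hh2 := integrable_norm_sq_schwartzMap h
  have hradial (x : E) : ‖fderiv ℝ (fun y => ‖h y‖ ^ 2) x (radialField ε (-1) x)‖ ≤
      2 * ((‖x‖ ^ 2 + ε) ^ (-(1 / 2) : ℝ) * ‖h x‖ * ‖fderiv ℝ h x‖) := by
    have hV : ‖radialField ε (-1) x‖ ≤ (‖x‖ ^ 2 + ε) ^ (-(1 / 2) : ℝ) :=
      (norm_radialField_le hε (-1) x).trans_eq (by norm_num)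
    rw [h.differentiableAt.hasFDerivAt.norm_sq.fderiv]
    calc ‖(2 • innerSL ℝ (h x) ∘L fderiv ℝ h x) (radialField ε (-1) x)‖
        = 2 * ‖inner ℝ (h x) (fderiv ℝ h x (radialField ε (-1) x))‖ := by simp
      _ ≤ 2 * (‖h x‖ * (‖fderiv ℝ h x‖ * (‖x‖ ^ 2 + ε) ^ (-(1 / 2) : ℝ))) := by
        gcongr
        refine (norm_inner_le_norm _ _).trans ?_
        gcongr
        exact (fderiv ℝ h x).le_opNorm_of_le hV
      _ = _ := by ring
  calc (finrank ℝ E - 2) * ∫ x, ((‖x‖ ^ 2 + ε) ^ (-(1 / 2) : ℝ) * ‖h x‖) ^ 2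
      ≤ ∫ x, divergence (radialField ε (-1)) x • ‖h x‖ ^ 2 := by
        rw [← integral_const_mul]
        refine integral_mono (huL.integrable_sq.const_mul _)
          (integrable_divergence_radialField_smul hε (by norm_num) hh2) fun x => ?_
        simp only [hsq, smul_eq_mul, ← mul_assoc]
        gcongr
        exact sub_two_mul_inv_le_divergence_radialField hε x
    _ = -∫ x, fderiv ℝ (fun y => ‖h y‖ ^ 2) x (radialField ε (-1) x) := by
        rw [integral_fderiv_radialField_eq hε (by norm_num)
          (fun x => h.differentiableAt.norm_sq ℝ) hh2
          (integrable_fderiv_norm_sq_schwartzMap h), neg_neg]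
    _ ≤ ∫ x, 2 * ((‖x‖ ^ 2 + ε) ^ (-(1 / 2) : ℝ) * ‖h x‖ * ‖fderiv ℝ h x‖) :=
        (neg_le_abs _).trans <| norm_integral_le_of_norm_le
          ((huL.integrable_mul (memLp_fderiv_schwartzMap h 2).norm).const_mul 2)
          (Eventually.of_forall hradial)
    _ = _ := integral_const_mul _ _

theorem hardy_inequality_schwartzMap {F : Type*} [NormedAddCommGroup F] [InnerProductSpace ℝ F]
    {ε : ℝ} (hε : 0 < ε) (h : 𝓢(E, F)) :
    (finrank ℝ E - 2) * √(∫ x, ((‖x‖ ^ 2 + ε) ^ (-(1 / 2) : ℝ) * ‖h x‖) ^ 2) ≤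
      2 * √(∫ x, ‖fderiv ℝ h x‖ ^ 2) := by
  have hkey := sub_two_mul_integral_sq_le hε h
  have hCS := integral_mul_le_sqrt_integral_sq (fun x => by positivity) (fun x => norm_nonneg _)
    (memLp_rpow_mul_norm_schwartzMap hε (p := -(1 / 2)) (by norm_num) h)
    (memLp_fderiv_schwartzMap h 2).norm
  set A := ∫ x, ((‖x‖ ^ 2 + ε) ^ (-(1 / 2) : ℝ) * ‖h x‖) ^ 2
  rcases (Real.sqrt_nonneg A).eq_or_lt with hA | hA
  · rw [← hA, mul_zero]
    positivity
  · refine le_of_mul_le_mul_right ?_ hA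
    rw [mul_assoc, Real.mul_self_sqrt (by positivity)]
    linarith

end Hardy

section RadialDeriv

variable {E : Type*} [NormedAddCommGroup E] [InnerProductSpace ℝ E]

/-- The radial derivative `∂_r g = (x/|x|) · ∇g`, which is `0` at the origin since `0⁻¹ = 0`. -/
def radialDeriv (g : E → ℂ) (x : E) : ℂ := fderiv ℝ g x (‖x‖⁻¹ • x)

theorem norm_radialDeriv_le (g : E → ℂ) (x : E) : ‖radialDeriv g x‖ ≤ ‖fderiv ℝ g x‖ := by
  refine (fderiv ℝ g x).unit_le_opNorm _ ?_
  rw [norm_smul, norm_inv, norm_norm]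
  exact inv_mul_le_one

theorem radialDeriv_add {g h : E → ℂ} (hg : Differentiable ℝ g) (hh : Differentiable ℝ h) (x : E) :
    radialDeriv (g + h) x = radialDeriv g x + radialDeriv h x :=
  congrArg (· (‖x‖⁻¹ • x)) (fderiv_add (hg x) (hh x))

theorem tendsto_radialField_zero (x : E) :
    Tendsto (fun ε : ℝ => radialField ε (-(1 / 2)) x) (nhdsWithin 0 (Set.Ioi 0))
      (nhds (‖x‖⁻¹ • x)) := by
  rcases eq_or_ne x 0 with rfl | hx
  · simp [radialField]
  · have hcont : ContinuousAt (fun ε : ℝ => (‖x‖ ^ 2 + ε) ^ (-(1 / 2) : ℝ) • x) 0 :=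
      ((continuousAt_const.add continuousAt_id).rpow_const (Or.inl (by simpa using hx))).smul
        continuousAt_const
    have hval : (‖x‖ ^ 2 + 0) ^ (-(1 / 2) : ℝ) = ‖x‖⁻¹ := by
      rw [add_zero, Real.rpow_neg (by positivity), ← Real.sqrt_eq_rpow,
        Real.sqrt_sq (norm_nonneg x)]
    have h := hcont.tendsto
    rw [hval] at h
    exact h.mono_left nhdsWithin_le_nhds

theorem norm_radialField_neg_half_le {ε : ℝ} (hε : 0 < ε) (x : E) :
    ‖radialField ε (-(1 / 2)) x‖ ≤ 1 := by
  simpa using norm_radialField_le hε (-(1 / 2)) x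

theorem norm_divergence_smul_add_le [FiniteDimensional ℝ E] {ε : ℝ} (hε : 0 < ε) (g h : E → ℂ)
    (x : E) :
    ‖divergence (radialField ε (-(1 / 2))) x • (g x * h x) +
      g x * fderiv ℝ h x (radialField ε (-(1 / 2)) x)‖ ≤
      (finrank ℝ E + 1) * (‖g x‖ * ((‖x‖ ^ 2 + ε) ^ (-(1 / 2) : ℝ) * ‖h x‖)) +
        ‖g x‖ * ‖fderiv ℝ h x‖ := by
  refine (norm_add_le _ _).trans (add_le_add ?_ ?_)
  · have hdiv := abs_divergence_radialField_le hε (-(1 / 2)) x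
    rw [abs_neg, abs_of_pos (one_half_pos (α := ℝ)), mul_one_div_cancel two_ne_zero] at hdiv
    rw [norm_smul, norm_mul, Real.norm_eq_abs, mul_left_comm ‖g x‖, ← mul_assoc (_ + _)]
    exact mul_le_mul_of_nonneg_right hdiv (by positivity)
  · rw [norm_mul]
    gcongr
    exact (fderiv ℝ h x).unit_le_opNorm _ (norm_radialField_neg_half_le hε x)

variable [FiniteDimensional ℝ E] [MeasurableSpace E] [BorelSpace E]

theorem aestronglyMeasurable_radialDeriv (g : 𝓢(E, ℂ)) :
    AEStronglyMeasurable (radialDeriv g) volume := by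
  have hg : Continuous (fderiv ℝ g) := (g.smooth 1).continuous_fderiv one_ne_zero
  have hunit : AEStronglyMeasurable (fun x : E => ‖x‖⁻¹ • x) volume :=
    (measurable_norm.inv.smul measurable_id).aestronglyMeasurable
  exact isBoundedBilinearMap_apply.continuous.comp_aestronglyMeasurable₂
    hg.aestronglyMeasurable hunit

theorem integrable_radialDeriv (g : 𝓢(E, ℂ)) : Integrable (radialDeriv g) :=
  (memLp_one_iff_integrable.1 (memLp_fderiv_schwartzMap g 1)).mono
    (aestronglyMeasurable_radialDeriv g) (Eventually.of_forall (norm_radialDeriv_le g))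

theorem integrable_radialDeriv_mul (g h : 𝓢(E, ℂ)) : Integrable fun x => radialDeriv g x * h x :=
  (integrable_radialDeriv g).mul_bdd h.continuous.aestronglyMeasurable
    (Eventually.of_forall (SchwartzMap.norm_le_seminorm ℝ h))

theorem norm_integral_radialDeriv_mul_le_fderiv_left (g h : 𝓢(E, ℂ)) :
    ‖∫ x, radialDeriv g x * h x‖ ≤ √(∫ x, ‖fderiv ℝ g x‖ ^ 2) * √(∫ x, ‖h x‖ ^ 2) := by
  have hg := (memLp_fderiv_schwartzMap g 2).norm
  have hh := (h.memLp 2).norm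
  refine (norm_integral_le_of_norm_le (hg.integrable_mul hh)
    (Eventually.of_forall fun x => ?_)).trans (integral_mul_le_sqrt_integral_sq
      (fun x => norm_nonneg _) (fun x => norm_nonneg _) hg hh)
  rw [norm_mul]
  exact mul_le_mul_of_nonneg_right (norm_radialDeriv_le g x) (norm_nonneg _)

theorem integrable_fderiv_radialField {ε : ℝ} (hε : 0 < ε) (f : 𝓢(E, ℂ)) :
    Integrable fun x => fderiv ℝ f x (radialField ε (-(1 / 2)) x) := by
  have hDf : Continuous (fderiv ℝ f) := (f.smooth 1).continuous_fderiv one_ne_zero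
  exact (memLp_one_iff_integrable.1 (memLp_fderiv_schwartzMap f 1)).mono
    (hDf.clm_apply (contDiff_radialField hε _).continuous).aestronglyMeasurable
    (Eventually.of_forall fun x =>
      (fderiv ℝ f x).unit_le_opNorm _ (norm_radialField_neg_half_le hε x))

theorem integral_fderiv_radialField_mul_eq {ε : ℝ} (hε : 0 < ε) (g h : 𝓢(E, ℂ)) :
    ∫ x, fderiv ℝ g x (radialField ε (-(1 / 2)) x) * h x =
      -∫ x, divergence (radialField ε (-(1 / 2))) x • (g x * h x) +
        g x * fderiv ℝ h x (radialField ε (-(1 / 2)) x) := by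
  set V : E → E := radialField ε (-(1 / 2)) with hVdef
  have hV : Continuous V := (contDiff_radialField hε _).continuous
  let gh : 𝓢(E, ℂ) := SchwartzMap.smulLeftCLM ℂ g h
  have hgh : ⇑gh = fun x => g x * h x :=
    funext fun x => SchwartzMap.smulLeftCLM_apply_apply g.hasTemperateGrowth h x
  have hDgh (x : E) : fderiv ℝ gh x = g x • fderiv ℝ h x + h x • fderiv ℝ g x := by
    rw [hgh]
    exact fderiv_mul g.differentiableAt h.differentiableAt
  have hDh : Integrable fun x => g x * fderiv ℝ h x (V x) := by
    have hbound : Integrable fun x => ‖g x‖ * ‖fderiv ℝ h x‖ :=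
      (g.memLp 2).norm.integrable_mul (memLp_fderiv_schwartzMap h 2).norm
    have hDhc : Continuous (fderiv ℝ h) := (h.smooth 1).continuous_fderiv one_ne_zero
    refine hbound.mono' (g.continuous.mul (hDhc.clm_apply hV)).aestronglyMeasurable
      (Eventually.of_forall fun x => ?_)
    rw [norm_mul]
    gcongr
    exact (fderiv ℝ h x).unit_le_opNorm _ (norm_radialField_neg_half_le hε x)
  have hdiv := integral_fderiv_radialField_eq hε le_rfl gh.differentiable gh.integrable
    (memLp_one_iff_integrable.1 (memLp_fderiv_schwartzMap gh 1))
  have hdivi := integrable_divergence_radialField_smul hε (p := -(1 / 2)) (by norm_num)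
    gh.integrable
  have hDi := integrable_fderiv_radialField hε gh
  simp only [← hVdef, hDgh] at hdiv hdivi hDi
  rw [hgh] at hdiv hdivi
  rw [integral_add hdivi hDh, neg_add, ← hdiv, ← sub_eq_add_neg, ← integral_sub hDi hDh]
  refine integral_congr_ae (Eventually.of_forall fun x => ?_)
  simp only [add_apply, smul_apply, smul_eq_mul]
  ring

theorem norm_integral_fderiv_radialField_mul_le (hE : 3 ≤ finrank ℝ E) {ε : ℝ} (hε : 0 < ε)
    (g h : 𝓢(E, ℂ)) :
    ‖∫ x, fderiv ℝ g x (radialField ε (-(1 / 2)) x) * h x‖ ≤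
      9 * (√(∫ x, ‖g x‖ ^ 2) * √(∫ x, ‖fderiv ℝ h x‖ ^ 2)) := by
  have hardy := hardy_inequality_schwartzMap hε h
  have hpoint := norm_divergence_smul_add_le hε g h
  have hn : (3 : ℝ) ≤ finrank ℝ E := mod_cast hE
  generalize (finrank ℝ E : ℝ) = n at hardy hpoint hn
  set u : E → ℝ := fun x => (‖x‖ ^ 2 + ε) ^ (-(1 / 2) : ℝ) * ‖h x‖
  have hu : MemLp u 2 := memLp_rpow_mul_norm_schwartzMap hε (by norm_num) h
  have hg := (g.memLp 2).norm
  have hDh := (memLp_fderiv_schwartzMap h 2).norm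
  have hgu : Integrable fun x => (n + 1) * (‖g x‖ * u x) := (hg.integrable_mul hu).const_mul _
  have hgDh : Integrable fun x => ‖g x‖ * ‖fderiv ℝ h x‖ := hg.integrable_mul hDh
  set G := √(∫ x, ‖g x‖ ^ 2)
  set D := √(∫ x, ‖fderiv ℝ h x‖ ^ 2)
  calc ‖∫ x, fderiv ℝ g x (radialField ε (-(1 / 2)) x) * h x‖
      ≤ ∫ x, (n + 1) * (‖g x‖ * u x) + ‖g x‖ * ‖fderiv ℝ h x‖ := by
        rw [integral_fderiv_radialField_mul_eq hε, norm_neg]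
        exact norm_integral_le_of_norm_le (hgu.add hgDh) (Eventually.of_forall hpoint)
    _ = (n + 1) * (∫ x, ‖g x‖ * u x) + ∫ x, ‖g x‖ * ‖fderiv ℝ h x‖ := by
        rw [integral_add hgu hgDh, integral_const_mul]
    _ ≤ (n + 1) * (G * √(∫ x, u x ^ 2)) + G * D := by
        gcongr
        · exact integral_mul_le_sqrt_integral_sq (fun x => norm_nonneg _)
            (fun x => by positivity) hg hu
        · exact integral_mul_le_sqrt_integral_sq (fun x => norm_nonneg _)
            (fun x => norm_nonneg _) hg hDh
    _ ≤ G * (4 * ((n - 2) * √(∫ x, u x ^ 2))) + G * D := by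
        rw [mul_left_comm, ← mul_assoc 4]
        gcongr
        linarith
    _ ≤ G * (4 * (2 * D)) + G * D := by gcongr
    _ = 9 * (G * D) := by ring

theorem norm_integral_radialDeriv_mul_le_fderiv_right (hE : 3 ≤ finrank ℝ E) (g h : 𝓢(E, ℂ)) :
    ‖∫ x, radialDeriv g x * h x‖ ≤
      9 * (√(∫ x, ‖g x‖ ^ 2) * √(∫ x, ‖fderiv ℝ h x‖ ^ 2)) := by
  have hbound : Integrable fun x => ‖fderiv ℝ g x‖ * ‖h x‖ :=
    (memLp_fderiv_schwartzMap g 2).norm.integrable_mul (h.memLp 2).norm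
  have hg : Continuous (fderiv ℝ g) := (g.smooth 1).continuous_fderiv one_ne_zero
  have hlim : Tendsto (fun ε => ∫ x, fderiv ℝ g x (radialField ε (-(1 / 2)) x) * h x)
      (nhdsWithin 0 (Set.Ioi 0)) (nhds (∫ x, radialDeriv g x * h x)) := by
    refine tendsto_integral_filter_of_dominated_convergence _
      (eventually_mem_nhdsWithin.mono fun ε hε => ?_)
      (eventually_mem_nhdsWithin.mono fun ε hε => Eventually.of_forall fun x => ?_) hbound
      (Eventually.of_forall fun x => ?_)
    · have := (contDiff_radialField (E := E) hε (-(1 / 2))).continuous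
      exact ((hg.clm_apply this).mul h.continuous).aestronglyMeasurable
    · rw [norm_mul]
      gcongr
      exact (fderiv ℝ g x).unit_le_opNorm _ (norm_radialField_neg_half_le hε x)
    · exact (((fderiv ℝ g x).continuous.tendsto _).comp (tendsto_radialField_zero x)).mul_const _
  exact le_of_tendsto hlim.norm (eventually_mem_nhdsWithin.mono fun ε hε =>
    norm_integral_fderiv_radialField_mul_le hE hε g h)

end RadialDeriv

section Interpolation

variable {E F G : Type*} [NormedAddCommGroup E] [InnerProductSpace ℝ E]
  [NormedAddCommGroup F] [NormedSpace ℝ F] [NormedAddCommGroup G]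

theorem hasTemperateGrowth_add_norm_sq_rpow {t : ℝ} (ht : 0 < t) (s : ℝ) :
    (fun x : E => (t + ‖x‖ ^ 2) ^ s).HasTemperateGrowth := by
  have hscale : (fun x : E => (t + ‖x‖ ^ 2) ^ s) =
      fun x => t ^ s * (fun y : E => (1 + ‖y‖ ^ 2) ^ s) (((√t)⁻¹ • .id ℝ E : E →L[ℝ] E) x) := by
    funext x
    rw [← Real.mul_rpow ht.le (by positivity)]
    simp [norm_smul, mul_pow, Real.sq_sqrt ht.le, abs_of_nonneg (Real.sqrt_nonneg t), mul_add,
      mul_inv_cancel_left₀ ht.ne']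
  rw [hscale]
  exact (Function.HasTemperateGrowth.const _).mul
    ((Function.hasTemperateGrowth_one_add_norm_sq_rpow E s).comp
      (ContinuousLinearMap.hasTemperateGrowth _))

theorem mul_sqrt_add_mul_sqrt_le {A B a b t : ℝ} (ha : 0 ≤ a) (hb : 0 ≤ b) (ht : 0 < t) :
    A * √a + B * √b ≤ √(t * A ^ 2 + B ^ 2) * √(t⁻¹ * a + b) := by
  rw [← Real.sqrt_mul (by positivity)]
  refine Real.le_sqrt_of_sq_le ?_
  have hcross : 0 ≤ t⁻¹ * (t * A * √b - B * √a) ^ 2 := by positivity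
  rw [← Real.sq_sqrt ha, ← Real.sq_sqrt hb, Real.sqrt_sq (Real.sqrt_nonneg _),
    Real.sqrt_sq (Real.sqrt_nonneg _)]
  refine sub_nonneg.1 (hcross.trans_eq ?_)
  field_simp
  ring

variable [FiniteDimensional ℝ E] [MeasurableSpace E] [BorelSpace E]

theorem norm_le_sqrt_mul_sqrt_integral_of_add {ℓ : 𝓢(E, F) → G}
    (hℓ : ∀ f g, ℓ (f + g) = ℓ f + ℓ g) {A B : ℝ}
    (hA : ∀ f, ‖ℓ f‖ ≤ A * √(∫ ξ, ‖ξ‖ ^ 2 * ‖f ξ‖ ^ 2)) (hB : ∀ f, ‖ℓ f‖ ≤ B * √(∫ ξ, ‖f ξ‖ ^ 2))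
    {t : ℝ} (ht : 0 < t) (f : 𝓢(E, F)) :
    ‖ℓ f‖ ≤ √(t * A ^ 2 + B ^ 2) * √(∫ ξ, ‖ξ‖ ^ 2 / (t + ‖ξ‖ ^ 2) * ‖f ξ‖ ^ 2) := by
  have hpos (ξ : E) : 0 < t + ‖ξ‖ ^ 2 := by positivity
  have hm : (fun ξ : E => t / (t + ‖ξ‖ ^ 2)).HasTemperateGrowth := by
    simp only [div_eq_mul_inv, ← Real.rpow_neg_one]
    exact (Function.HasTemperateGrowth.const t).mul (hasTemperateGrowth_add_norm_sq_rpow ht (-1))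
  let f₀ : 𝓢(E, F) := SchwartzMap.smulLeftCLM F (fun ξ : E => t / (t + ‖ξ‖ ^ 2)) f
  have hf₀ (ξ : E) : f₀ ξ = (t / (t + ‖ξ‖ ^ 2)) • f ξ :=
    SchwartzMap.smulLeftCLM_apply_apply hm f ξ
  have hf₁ (ξ : E) : (f - f₀) ξ = (‖ξ‖ ^ 2 / (t + ‖ξ‖ ^ 2)) • f ξ := by
    rw [sub_apply, hf₀, sub_eq_iff_eq_add, ← add_smul, ← add_div, add_comm,
      div_self (hpos ξ).ne', one_smul]
  have hi₀ : Integrable fun ξ : E => ‖ξ‖ ^ 2 * ‖f₀ ξ‖ ^ 2 := by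
    simpa using integrable_norm_rpow_mul_norm_sq_schwartzMap f₀ zero_le_two
  have hi₁ := integrable_norm_sq_schwartzMap (f - f₀)
  calc ‖ℓ f‖ ≤ ‖ℓ f₀‖ + ‖ℓ (f - f₀)‖ := by
        rw [← add_sub_cancel f₀ f, hℓ, add_sub_cancel]
        exact norm_add_le _ _
    _ ≤ A * √(∫ ξ, ‖ξ‖ ^ 2 * ‖f₀ ξ‖ ^ 2) + B * √(∫ ξ, ‖(f - f₀) ξ‖ ^ 2) :=
        add_le_add (hA f₀) (hB _)
    _ ≤ √(t * A ^ 2 + B ^ 2) *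
          √(t⁻¹ * (∫ ξ, ‖ξ‖ ^ 2 * ‖f₀ ξ‖ ^ 2) + ∫ ξ, ‖(f - f₀) ξ‖ ^ 2) :=
        mul_sqrt_add_mul_sqrt_le (by positivity) (by positivity) ht
    _ = √(t * A ^ 2 + B ^ 2) * √(∫ ξ, ‖ξ‖ ^ 2 / (t + ‖ξ‖ ^ 2) * ‖f ξ‖ ^ 2) := by
        rw [← integral_const_mul, ← integral_add (hi₀.const_mul _) hi₁]
        congr 3 with ξ
        have := (hpos ξ).ne'
        rw [hf₀, hf₁, norm_smul, norm_smul, Real.norm_of_nonneg (by positivity),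
          Real.norm_of_nonneg (by positivity)]
        field_simp

end Interpolation

section Pairing

theorem sqrt_le_mul_sqrt {a b c : ℝ} (hc : 0 ≤ c) (h : a ≤ c ^ 2 * b) : √a ≤ c * √b :=
  (Real.sqrt_le_sqrt h).trans_eq (by rw [Real.sqrt_mul (sq_nonneg c), Real.sqrt_sq hc])

variable {E : Type*} [NormedAddCommGroup E] [InnerProductSpace ℝ E] [FiniteDimensional ℝ E]
  [MeasurableSpace E] [BorelSpace E]

theorem norm_integral_radialDeriv_mul_fourier_le_norm_mul_left (g ψ : 𝓢(E, ℂ)) :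
    ‖∫ x, radialDeriv g x * 𝓕 ψ x‖ ≤
      18 * π * √(∫ ξ, ‖ψ ξ‖ ^ 2) * √(∫ ξ, ‖ξ‖ ^ 2 * ‖𝓕 g ξ‖ ^ 2) := by
  have hD := sqrt_le_mul_sqrt Real.two_pi_pos.le (integral_norm_fderiv_sq_le g)
  calc ‖∫ x, radialDeriv g x * 𝓕 ψ x‖
      ≤ √(∫ x, ‖fderiv ℝ g x‖ ^ 2) * √(∫ x, ‖𝓕 ψ x‖ ^ 2) :=
        norm_integral_radialDeriv_mul_le_fderiv_left g (𝓕 ψ)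
    _ = √(∫ x, ‖fderiv ℝ g x‖ ^ 2) * √(∫ ξ, ‖ψ ξ‖ ^ 2) := by
        rw [SchwartzMap.integral_norm_sq_fourier]
    _ ≤ 18 * π * √(∫ ξ, ‖ξ‖ ^ 2 * ‖𝓕 g ξ‖ ^ 2) * √(∫ ξ, ‖ψ ξ‖ ^ 2) := by
        gcongr
        refine hD.trans ?_
        gcongr
        norm_num
    _ = 18 * π * √(∫ ξ, ‖ψ ξ‖ ^ 2) * √(∫ ξ, ‖ξ‖ ^ 2 * ‖𝓕 g ξ‖ ^ 2) := by ring

theorem norm_integral_radialDeriv_mul_fourier_le_norm_mul_right (hE : 3 ≤ finrank ℝ E)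
    (g ψ : 𝓢(E, ℂ)) :
    ‖∫ x, radialDeriv g x * 𝓕 ψ x‖ ≤
      18 * π * √(∫ ξ, ‖ξ‖ ^ 2 * ‖ψ ξ‖ ^ 2) * √(∫ ξ, ‖𝓕 g ξ‖ ^ 2) := by
  have hD := sqrt_le_mul_sqrt Real.two_pi_pos.le (integral_norm_fderiv_fourier_sq_le ψ)
  calc ‖∫ x, radialDeriv g x * 𝓕 ψ x‖
      ≤ 9 * (√(∫ x, ‖g x‖ ^ 2) * √(∫ x, ‖fderiv ℝ (𝓕 ψ : 𝓢(E, ℂ)) x‖ ^ 2)) :=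
        norm_integral_radialDeriv_mul_le_fderiv_right hE g (𝓕 ψ)
    _ ≤ 9 * (√(∫ ξ, ‖𝓕 g ξ‖ ^ 2) * (2 * π * √(∫ ξ, ‖ξ‖ ^ 2 * ‖ψ ξ‖ ^ 2))) := by
        rw [SchwartzMap.integral_norm_sq_fourier]
        gcongr
    _ = 18 * π * √(∫ ξ, ‖ξ‖ ^ 2 * ‖ψ ξ‖ ^ 2) * √(∫ ξ, ‖𝓕 g ξ‖ ^ 2) := by ring

theorem norm_integral_radialDeriv_mul_fourier_le (hE : 3 ≤ finrank ℝ E) (g ψ : 𝓢(E, ℂ)) {t : ℝ}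
    (ht : 0 < t) :
    ‖∫ x, radialDeriv g x * 𝓕 ψ x‖ ≤ 18 * π * √(∫ ξ, (t + ‖ξ‖ ^ 2) * ‖ψ ξ‖ ^ 2) *
      √(∫ ξ, ‖ξ‖ ^ 2 / (t + ‖ξ‖ ^ 2) * ‖𝓕 g ξ‖ ^ 2) := by
  have hψ : Integrable fun ξ => t * ‖ψ ξ‖ ^ 2 := (integrable_norm_sq_schwartzMap ψ).const_mul t
  have hrψ : Integrable fun ξ => ‖ξ‖ ^ 2 * ‖ψ ξ‖ ^ 2 := by
    simpa using integrable_norm_rpow_mul_norm_sq_schwartzMap ψ zero_le_two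
  let ℓ (f : 𝓢(E, ℂ)) : ℂ := ∫ x, radialDeriv (𝓕⁻ f : 𝓢(E, ℂ)) x * 𝓕 ψ x
  have hℓ (f₁ f₂) : ℓ (f₁ + f₂) = ℓ f₁ + ℓ f₂ := by
    simp only [ℓ, FourierTransform.fourierInv_add, ← integral_add
      (integrable_radialDeriv_mul _ (𝓕 ψ)) (integrable_radialDeriv_mul _ (𝓕 ψ)), ← add_mul,
      ← radialDeriv_add (SchwartzMap.differentiable _) (SchwartzMap.differentiable _)]
    rfl
  have h := norm_le_sqrt_mul_sqrt_integral_of_add hℓ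
    (A := 18 * π * √(∫ ξ, ‖ψ ξ‖ ^ 2)) (B := 18 * π * √(∫ ξ, ‖ξ‖ ^ 2 * ‖ψ ξ‖ ^ 2))
    (fun f => by simpa only [FourierTransform.fourier_fourierInv_eq] using
      norm_integral_radialDeriv_mul_fourier_le_norm_mul_left (𝓕⁻ f) ψ)
    (fun f => by simpa only [FourierTransform.fourier_fourierInv_eq] using
      norm_integral_radialDeriv_mul_fourier_le_norm_mul_right hE (𝓕⁻ f) ψ) ht (𝓕 g)
  simp only [ℓ, FourierTransform.fourierInv_fourier_eq] at h
  have hweight : √(t * (18 * π * √(∫ ξ, ‖ψ ξ‖ ^ 2)) ^ 2 +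
      (18 * π * √(∫ ξ, ‖ξ‖ ^ 2 * ‖ψ ξ‖ ^ 2)) ^ 2) ≤
      18 * π * √(∫ ξ, (t + ‖ξ‖ ^ 2) * ‖ψ ξ‖ ^ 2) := by
    refine sqrt_le_mul_sqrt (by positivity) (le_of_eq ?_)
    simp only [add_mul]
    rw [integral_add hψ hrψ, integral_const_mul, mul_pow (18 * π), mul_pow (18 * π),
      Real.sq_sqrt (by positivity), Real.sq_sqrt (by positivity)]
    ring
  exact h.trans (mul_le_mul_of_nonneg_right hweight (Real.sqrt_nonneg _))

end Pairing

section Duality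

variable {E : Type*} [NormedAddCommGroup E] [NormedSpace ℝ E] [FiniteDimensional ℝ E]
  [MeasurableSpace E] [BorelSpace E] {μ : Measure E}

theorem exists_Lp_of_norm_le_sqrt_integral_sq [μ.HasTemperateGrowth]
    [IsFiniteMeasureOnCompacts μ] {ℓ : 𝓢(E, ℂ) →ₗ[ℂ] ℂ} {M : ℝ} (hM : 0 ≤ M)
    (hℓ : ∀ φ, ‖ℓ φ‖ ≤ M * √(∫ x, ‖φ x‖ ^ 2 ∂μ)) :
    ∃ k : Lp ℂ 2 μ, ‖k‖ ≤ M ∧ ∀ φ, ℓ φ = ∫ x, φ x * starRingEnd ℂ (k x) ∂μ := by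
  let e : 𝓢(E, ℂ) →ₗ[ℂ] Lp ℂ 2 μ := SchwartzMap.toLpCLM ℂ ℂ 2 μ
  have he : DenseRange e := SchwartzMap.denseRange_toLpCLM ENNReal.ofNat_ne_top
  have hbound (φ) : ‖ℓ φ‖ ≤ M * ‖e φ‖ := by
    refine (hℓ φ).trans_eq (congrArg (M * ·) ?_)
    change _ = ‖φ.toLp 2 μ‖
    rw [SchwartzMap.norm_toLp' two_ne_zero ENNReal.ofNat_ne_top, Real.sqrt_eq_rpow]
    simp
  refine ⟨(InnerProductSpace.toDual ℂ _).symm (ℓ.extendOfNorm e), ?_, fun φ => ?_⟩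
  · rw [LinearIsometryEquiv.norm_map]
    exact LinearMap.opNorm_extendOfNorm_le he hM hbound
  · rw [← LinearMap.extendOfNorm_eq he ⟨M, hbound⟩, ← InnerProductSpace.toDual_symm_apply,
      L2.inner_def]
    refine integral_congr_ae ((SchwartzMap.coeFn_toLp φ 2 μ).mono fun x hx => ?_)
    simp only [show (e φ) x = φ x from hx, RCLike.inner_apply]

theorem lintegral_enorm_sq_le_of_norm_integral_mul_le [μ.HasTemperateGrowth]
    [IsFiniteMeasureOnCompacts μ] {H : E → ℂ} (hH : MemLp H ∞ μ)
    {M : ℝ} (hM : 0 ≤ M) (h : ∀ φ : 𝓢(E, ℂ), ‖∫ x, φ x * H x ∂μ‖ ≤ M * √(∫ x, ‖φ x‖ ^ 2 ∂μ)) :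
    ∫⁻ x, ‖H x‖ₑ ^ 2 ∂μ ≤ ENNReal.ofReal (M ^ 2) := by
  have hint (φ : 𝓢(E, ℂ)) : Integrable (fun x => φ x * H x) μ :=
    φ.integrable.mul_of_top_left hH
  let ℓ : 𝓢(E, ℂ) →ₗ[ℂ] ℂ :=
    { toFun φ := ∫ x, φ x * H x ∂μ
      map_add' φ ψ := by
        simp only [add_apply, add_mul, integral_add (hint φ) (hint ψ)]
      map_smul' c φ := by
        simp only [smul_apply, smul_eq_mul, mul_assoc, integral_const_mul, RingHom.id_apply] }
  obtain ⟨k, hkM, hk⟩ := exists_Lp_of_norm_le_sqrt_integral_sq (ℓ := ℓ) hM h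
  have hHk : H =ᵐ[μ] fun x => starRingEnd ℂ (k x) := by
    refine ae_eq_of_integral_contDiff_smul_eq (hH.locallyIntegrable le_top)
      ((Lp.memLp k).star.locallyIntegrable one_le_two) fun φ hφ hφc => ?_
    have hφ' : HasCompactSupport fun x => (φ x : ℂ) := hφc.comp_left Complex.ofReal_zero
    exact hk (hφ'.toSchwartzMap (Complex.ofRealCLM.contDiff.comp hφ))
  calc ∫⁻ x, ‖H x‖ₑ ^ 2 ∂μ = ∫⁻ x, ‖k x‖ₑ ^ 2 ∂μ :=
        lintegral_congr_ae (hHk.mono fun x hx => by simp only [hx, RCLike.enorm_conj])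
    _ = ‖k‖ₑ ^ 2 := by
        have := eLpNorm_nnreal_pow_eq_lintegral (p := 2) (f := k) (μ := μ) two_ne_zero
        simpa [Lp.enorm_def] using this.symm
    _ ≤ ENNReal.ofReal (M ^ 2) := by
        rw [ENNReal.ofReal_pow hM, ← ofReal_norm]
        gcongr

end Duality

section Resolvent

theorem lintegral_Ioi_rpow_sub_one_mul_inv_add {p ρ : ℝ} (hp : p ∈ Set.Ioo 0 1) (hρ : 0 < ρ) :
    ∫⁻ t in Set.Ioi 0, ENNReal.ofReal (t ^ (p - 1)) * ENNReal.ofReal (t + ρ)⁻¹ =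
      ENNReal.ofReal (∫ t in Set.Ioi 0, rpowIntegrand₀₁ p t 1) * ENNReal.ofReal (ρ ^ (p - 1)) := by
  have hintegrand : ∀ t ∈ Set.Ioi (0 : ℝ),
      ENNReal.ofReal (t ^ (p - 1)) * ENNReal.ofReal (t + ρ)⁻¹ =
        ENNReal.ofReal (ρ⁻¹ * rpowIntegrand₀₁ p t ρ) := fun t ht => by
    rw [rpowIntegrand₀₁_eq_pow_div hp (le_of_lt ht) hρ.le,
      ← ENNReal.ofReal_mul (Real.rpow_nonneg (le_of_lt ht) _)]
    congr 1
    field_simp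
  rw [setLIntegral_congr_fun measurableSet_Ioi hintegrand, ← ofReal_integral_eq_lintegral_ofReal
    ((integrableOn_rpowIntegrand₀₁_Ioi hp hρ.le).const_mul _), integral_const_mul,
    integral_rpowIntegrand₀₁_eq_rpow_mul_const hp hρ.le,
    ← ENNReal.ofReal_mul (integral_rpowIntegrand₀₁_one_pos hp).le, Real.rpow_sub_one hρ.ne']
  · congr 1
    field_simp
  · filter_upwards [ae_restrict_mem measurableSet_Ioi] with t ht
    exact mul_nonneg (inv_nonneg.2 hρ.le) (rpowIntegrand₀₁_nonneg hp.1 (le_of_lt ht) hρ.le)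

variable {α : Type*} [MeasurableSpace α] {μ : Measure α} [SFinite μ] {ρ : α → ℝ}

theorem lintegral_Ioi_rpow_sub_one_mul_lintegral_inv_add {p : ℝ} (hp : p ∈ Set.Ioo 0 1)
    (hρ : Measurable ρ) (hρ₀ : ∀ᵐ x ∂μ, 0 < ρ x) {u : α → ℝ≥0∞} (hu : AEMeasurable u μ) :
    ∫⁻ t in Set.Ioi 0, ENNReal.ofReal (t ^ (p - 1)) *
        ∫⁻ x, ENNReal.ofReal (t + ρ x)⁻¹ * u x ∂μ =
      ENNReal.ofReal (∫ t in Set.Ioi 0, rpowIntegrand₀₁ p t 1) *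
        ∫⁻ x, ENNReal.ofReal (ρ x ^ (p - 1)) * u x ∂μ := by
  have hmeas : AEMeasurable (fun z : ℝ × α => ENNReal.ofReal (z.1 ^ (p - 1)) *
      (ENNReal.ofReal (z.1 + ρ z.2)⁻¹ * u z.2)) ((volume.restrict (Set.Ioi 0)).prod μ) := by
    have : AEMeasurable (fun z : ℝ × α => u z.2) ((volume.restrict (Set.Ioi 0)).prod μ) :=
      hu.comp_snd
    fun_prop
  calc _ = ∫⁻ t in Set.Ioi 0, ∫⁻ x, ENNReal.ofReal (t ^ (p - 1)) *
        (ENNReal.ofReal (t + ρ x)⁻¹ * u x) ∂μ := by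
        simp only [lintegral_const_mul' _ _ ENNReal.ofReal_ne_top]
    _ = ∫⁻ x, (∫⁻ t in Set.Ioi 0, ENNReal.ofReal (t ^ (p - 1)) * ENNReal.ofReal (t + ρ x)⁻¹) *
        u x ∂μ := by
        rw [lintegral_lintegral_swap hmeas]
        refine lintegral_congr fun x => ?_
        rw [← lintegral_mul_const _ (by fun_prop)]
        simp only [mul_assoc]
    _ = _ := by
        rw [← lintegral_const_mul' _ _ ENNReal.ofReal_ne_top]
        refine lintegral_congr_ae (hρ₀.mono fun x hx => ?_)
        simp only [lintegral_Ioi_rpow_sub_one_mul_inv_add hp hx, mul_assoc]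

theorem lintegral_rpow_sub_one_mul_le_of_inv_add {p : ℝ} (hp : p ∈ Set.Ioo 0 1)
    (hρ : Measurable ρ) (hρ₀ : ∀ᵐ x ∂μ, 0 < ρ x) {u v : α → ℝ≥0∞} (hu : AEMeasurable u μ)
    (hv : AEMeasurable v μ)
    (h : ∀ t > 0, ∫⁻ x, ENNReal.ofReal (t + ρ x)⁻¹ * u x ∂μ ≤
      ∫⁻ x, ENNReal.ofReal (t + ρ x)⁻¹ * v x ∂μ) :
    ∫⁻ x, ENNReal.ofReal (ρ x ^ (p - 1)) * u x ∂μ ≤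
      ∫⁻ x, ENNReal.ofReal (ρ x ^ (p - 1)) * v x ∂μ := by
  have hc : ENNReal.ofReal (∫ t in Set.Ioi 0, rpowIntegrand₀₁ p t 1) ≠ 0 :=
    ENNReal.ofReal_ne_zero_iff.2 (integral_rpowIntegrand₀₁_one_pos hp)
  rw [← ENNReal.mul_le_mul_iff_right hc ENNReal.ofReal_ne_top,
    ← lintegral_Ioi_rpow_sub_one_mul_lintegral_inv_add hp hρ hρ₀ hu,
    ← lintegral_Ioi_rpow_sub_one_mul_lintegral_inv_add hp hρ hρ₀ hv]
  refine setLIntegral_mono' measurableSet_Ioi fun t ht => ?_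
  exact mul_le_mul_right (h t ht) _

end Resolvent

section FourierResolvent

variable {E F : Type*} [NormedAddCommGroup E] [InnerProductSpace ℝ E] [FiniteDimensional ℝ E]
  [MeasurableSpace E] [BorelSpace E] [NormedAddCommGroup F] [NormedSpace ℂ F]

theorem lintegral_inv_add_mul_enorm_sq_le_of_norm_integral_mul_le {μ : Measure E}
    [μ.HasTemperateGrowth] [IsFiniteMeasureOnCompacts μ] {H : E → ℂ} (hH : MemLp H ∞ μ) {t : ℝ}
    (ht : 0 < t) {M : ℝ} (hM : 0 ≤ M)
    (h : ∀ ψ : 𝓢(E, ℂ), ‖∫ ξ, H ξ * ψ ξ ∂μ‖ ≤ M * √(∫ ξ, (t + ‖ξ‖ ^ 2) * ‖ψ ξ‖ ^ 2 ∂μ)) :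
    ∫⁻ ξ, ENNReal.ofReal (t + ‖ξ‖ ^ 2)⁻¹ * ‖H ξ‖ₑ ^ 2 ∂μ ≤ ENNReal.ofReal (M ^ 2) := by
  let w (ξ : E) : ℝ := (t + ‖ξ‖ ^ 2) ^ (-(1 / 2) : ℝ)
  have hw : w.HasTemperateGrowth := hasTemperateGrowth_add_norm_sq_rpow ht _
  have hw_norm (ξ : E) : ‖(w ξ : ℂ)‖ = w ξ := Complex.norm_of_nonneg (by positivity)
  have hw_sq (ξ : E) : w ξ ^ 2 = (t + ‖ξ‖ ^ 2)⁻¹ := by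
    rw [← Real.rpow_mul_natCast (by positivity), ← Real.rpow_neg_one]
    norm_num
  have hw_top : MemLp (fun ξ => (w ξ : ℂ)) ∞ μ := by
    refine memLp_top_of_bound (C := t ^ (-(1 / 2) : ℝ)) ?_ (.of_forall fun ξ => ?_)
    · exact (Complex.continuous_ofReal.comp hw.1.continuous).aestronglyMeasurable
    · rw [hw_norm]
      exact Real.rpow_le_rpow_of_nonpos ht (by simp) (by norm_num)
  have hwH : MemLp (fun ξ => w ξ * H ξ) ∞ μ := hH.mul hw_top
  have hdual (φ : 𝓢(E, ℂ)) : ‖∫ ξ, φ ξ * (w ξ * H ξ) ∂μ‖ ≤ M * √(∫ ξ, ‖φ ξ‖ ^ 2 ∂μ) := by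
    have hψ (ξ : E) : SchwartzMap.smulLeftCLM ℂ w φ ξ = w ξ * φ ξ :=
      SchwartzMap.smulLeftCLM_apply_apply hw φ ξ
    have hmul (ξ : E) : H ξ * SchwartzMap.smulLeftCLM ℂ w φ ξ = φ ξ * (w ξ * H ξ) := by
      rw [hψ]
      ring
    have hnorm (ξ : E) : (t + ‖ξ‖ ^ 2) * ‖SchwartzMap.smulLeftCLM ℂ w φ ξ‖ ^ 2 = ‖φ ξ‖ ^ 2 := by
      rw [hψ, norm_mul, hw_norm, mul_pow, hw_sq, mul_inv_cancel_left₀ (by positivity)]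
    simpa only [hmul, hnorm] using h (SchwartzMap.smulLeftCLM ℂ w φ)
  refine (lintegral_congr fun ξ => ?_).trans_le
    (lintegral_enorm_sq_le_of_norm_integral_mul_le hwH hM hdual)
  rw [enorm_mul, mul_pow, ← hw_sq, ENNReal.ofReal_pow (by positivity), ← ofReal_norm (w ξ : ℂ),
    hw_norm]

theorem memLp_top_fourier {f : E → F} (hf : Integrable f) : MemLp (𝓕 f) ∞ :=
  memLp_top_of_bound
    (VectorFourier.fourierIntegral_continuous (L := innerₗ E) Real.continuous_fourierChar
      (by exact continuous_inner) hf).aestronglyMeasurable (∫ x, ‖f x‖)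
    (.of_forall fun ξ => VectorFourier.norm_fourierIntegral_le_integral_norm _ _ _ f ξ)

theorem integral_fourier_smul_eq_of_integrable [CompleteSpace F] {f : E → ℂ} {g : E → F}
    (hf : Integrable f) (hg : Integrable g) : ∫ ξ, 𝓕 f ξ • g ξ = ∫ x, f x • 𝓕 g x := by
  have := VectorFourier.integral_fourierIntegral_smul_eq_flip (L := innerₗ E)
    Real.continuous_fourierChar (by exact continuous_inner) hf hg
  rwa [flip_innerₗ] at this

theorem lintegral_inv_add_mul_enorm_fourier_radialDeriv_sq_le (hE : 3 ≤ finrank ℝ E)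
    (g : 𝓢(E, ℂ)) {t : ℝ} (ht : 0 < t) :
    ∫⁻ ξ : E, ENNReal.ofReal (t + ‖ξ‖ ^ 2)⁻¹ * ‖𝓕 (radialDeriv g) ξ‖ₑ ^ 2 ≤
      ∫⁻ ξ : E, ENNReal.ofReal (t + ‖ξ‖ ^ 2)⁻¹ *
        ENNReal.ofReal ((18 * π) ^ 2 * (‖ξ‖ ^ 2 * ‖𝓕 g ξ‖ ^ 2)) := by
  have hint : Integrable fun ξ : E => ‖ξ‖ ^ 2 / (t + ‖ξ‖ ^ 2) * ‖𝓕 g ξ‖ ^ 2 := by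
    refine (integrable_norm_sq_schwartzMap (𝓕 g)).bdd_mul (c := 1)
      (by fun_prop : Measurable _).aestronglyMeasurable (.of_forall fun ξ => ?_)
    rw [Real.norm_of_nonneg (by positivity)]
    exact div_le_one_of_le₀ (by linarith) (by positivity)
  refine (lintegral_inv_add_mul_enorm_sq_le_of_norm_integral_mul_le
    (memLp_top_fourier (integrable_radialDeriv g)) ht
    (M := 18 * π * √(∫ ξ, ‖ξ‖ ^ 2 / (t + ‖ξ‖ ^ 2) * ‖𝓕 g ξ‖ ^ 2)) (by positivity)
    fun ψ => ?_).trans ?_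
  · have hflip : ∫ ξ, 𝓕 (radialDeriv g) ξ * ψ ξ = ∫ x, radialDeriv g x * 𝓕 ψ x :=
      integral_fourier_smul_eq_of_integrable (integrable_radialDeriv g) ψ.integrable
    rw [hflip, mul_right_comm]
    exact norm_integral_radialDeriv_mul_fourier_le hE g ψ ht
  · rw [mul_pow, Real.sq_sqrt (by positivity), ← integral_const_mul,
      ofReal_integral_eq_lintegral_ofReal (hint.const_mul _) (.of_forall fun ξ => by positivity)]
    refine lintegral_mono fun ξ => ?_
    rw [← ENNReal.ofReal_mul (by positivity)]
    refine ENNReal.ofReal_le_ofReal (le_of_eq ?_)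
    ring

end FourierResolvent

section HomogeneousSobolev

variable {E : Type*} [NormedAddCommGroup E] [InnerProductSpace ℝ E] [FiniteDimensional ℝ E]
  [MeasurableSpace E] [BorelSpace E]

/-- The squared homogeneous Sobolev norm `‖g‖²_{Ḣ^σ}` on a finite-dimensional inner product space,
with the junk value `0` when the weighted integral diverges. -/
def homSobolevSq (σ : ℝ) (g : E → ℂ) : ℝ := ∫ ξ : E, ‖ξ‖ ^ (2 * σ) * ‖𝓕 g ξ‖ ^ 2

theorem homSobolevSq_nonneg (σ : ℝ) (g : E → ℂ) : 0 ≤ homSobolevSq σ g :=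
  integral_nonneg fun _ => by positivity

theorem lintegral_rpow_mul_enorm_fourier_radialDeriv_sq_le (hE : 3 ≤ finrank ℝ E) {σ : ℝ}
    (hσ : σ ∈ Set.Ioo 0 1) (g : 𝓢(E, ℂ)) :
    ∫⁻ ξ : E, ENNReal.ofReal (‖ξ‖ ^ (2 * (σ - 1))) * ‖𝓕 (radialDeriv g) ξ‖ₑ ^ 2 ≤
      ENNReal.ofReal ((18 * π) ^ 2 * homSobolevSq σ g) := by
  have : Nontrivial E := Module.nontrivial_of_finrank_pos (R := ℝ) (by lia)
  have hpos : ∀ᵐ ξ : E, 0 < ‖ξ‖ ^ 2 := by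
    filter_upwards [compl_mem_ae_iff.2 (measure_singleton (0 : E))] with ξ hξ
    exact pow_pos (norm_pos_iff.2 hξ) 2
  have hrpow (s : ℝ) (ξ : E) : ‖ξ‖ ^ (2 * s) = (‖ξ‖ ^ 2) ^ s :=
    Real.rpow_natCast_mul (norm_nonneg ξ) 2 s
  have hint : Integrable fun ξ : E => (18 * π) ^ 2 * (‖ξ‖ ^ (2 * σ) * ‖𝓕 g ξ‖ ^ 2) :=
    (integrable_norm_rpow_mul_norm_sq_schwartzMap (𝓕 g) (by linarith [hσ.1])).const_mul _
  calc ∫⁻ ξ : E, ENNReal.ofReal (‖ξ‖ ^ (2 * (σ - 1))) * ‖𝓕 (radialDeriv g) ξ‖ₑ ^ 2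
      ≤ ∫⁻ ξ : E, ENNReal.ofReal ((‖ξ‖ ^ 2) ^ (σ - 1)) *
          ENNReal.ofReal ((18 * π) ^ 2 * (‖ξ‖ ^ 2 * ‖𝓕 g ξ‖ ^ 2)) := by
        simp only [hrpow]
        exact lintegral_rpow_sub_one_mul_le_of_inv_add hσ (by fun_prop) hpos
          ((memLp_top_fourier (integrable_radialDeriv g)).1.enorm.pow_const 2) (by fun_prop)
          fun t ht => lintegral_inv_add_mul_enorm_fourier_radialDeriv_sq_le hE g ht
    _ = ∫⁻ ξ : E, ENNReal.ofReal ((18 * π) ^ 2 * (‖ξ‖ ^ (2 * σ) * ‖𝓕 g ξ‖ ^ 2)) := by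
        refine lintegral_congr_ae (hpos.mono fun ξ hξ => ?_)
        have hξ₀ : ‖ξ‖ ≠ 0 := pow_ne_zero_iff two_ne_zero |>.1 hξ.ne'
        beta_reduce
        rw [← ENNReal.ofReal_mul (Real.rpow_nonneg hξ.le _), Real.rpow_sub_one hξ.ne', hrpow σ ξ]
        field_simp
    _ = ENNReal.ofReal ((18 * π) ^ 2 * homSobolevSq σ g) := by
        rw [← ofReal_integral_eq_lintegral_ofReal hint (.of_forall fun ξ => by positivity),
          integral_const_mul, SchwartzMap.fourier_coe, homSobolevSq]

theorem radial_derivative_Hminushalf_bound_general (hE : 3 ≤ finrank ℝ E) {σ : ℝ}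
    (hσ : σ ∈ Set.Ioo 0 1) (g : 𝓢(E, ℂ)) :
    √(homSobolevSq (σ - 1) (radialDeriv g)) ≤ 18 * π * √(homSobolevSq σ g) := by
  refine sqrt_le_mul_sqrt (by positivity) ?_
  have hmeas : AEMeasurable fun ξ : E => ‖ξ‖ ^ (2 * (σ - 1)) * ‖𝓕 (radialDeriv g) ξ‖ ^ 2 :=
    (by fun_prop : AEMeasurable fun ξ : E => ‖ξ‖ ^ (2 * (σ - 1))).mul
      ((memLp_top_fourier (integrable_radialDeriv g)).1.norm.pow 2).aemeasurable
  rw [homSobolevSq, integral_eq_lintegral_of_nonneg_ae (.of_forall fun ξ => by positivity)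
    hmeas.aestronglyMeasurable]
  refine ENNReal.toReal_le_of_le_ofReal (mul_nonneg (by positivity) (homSobolevSq_nonneg σ g)) ?_
  refine (lintegral_congr fun ξ => ?_).trans_le
    (lintegral_rpow_mul_enorm_fourier_radialDeriv_sq_le hE hσ g)
  rw [ENNReal.ofReal_mul (by positivity), ENNReal.ofReal_pow (norm_nonneg _), ofReal_norm]

end HomogeneousSobolev

theorem sum_mul_pd_eq_radialDeriv (g : E3 → ℂ) (x : E3) :
    ∑ i : Fin 3, ((x i / ‖x‖ : ℝ) : ℂ) * pd g i x = radialDeriv g x := by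
  have hx : ‖x‖⁻¹ • x = ∑ i, (x i / ‖x‖) • e3 i := by
    refine (congrArg (‖x‖⁻¹ • ·) ((EuclideanSpace.basisFun (Fin 3) ℝ).sum_repr x)).symm.trans ?_
    simp only [e3, EuclideanSpace.basisFun_repr, EuclideanSpace.basisFun_apply, Finset.smul_sum,
      smul_smul, div_eq_inv_mul]
  simp only [radialDeriv, hx, map_sum, map_smul, pd, Complex.real_smul]

/-- There is `C > 0` so that for every Schwartz `g : ℝ³ → ℂ`, the radial
derivative `∂_r g(x) = (x/|x|)·∇g(x)` satisfies `‖∂_r g‖_{Ḣ^{−1/2}} ≤ C ‖g‖_{Ḣ^{1/2}}`. -/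
theorem radial_derivative_Hminushalf_bound :
    ∃ C > (0:ℝ), ∀ g : SchwartzMap E3 ℂ,
      Real.sqrt (sobSq (-(1/2))
          (fun x : E3 => ∑ i : Fin 3, ((x i / ‖x‖ : ℝ) : ℂ) * pd (fun z => g z) i x))
        ≤ C * Real.sqrt (sobSq (1/2) (fun x => g x)) := by
  refine ⟨18 * π, by positivity, fun g => ?_⟩
  simp only [sum_mul_pd_eq_radialDeriv]
  rw [show (-(1 / 2) : ℝ) = 1 / 2 - 1 by norm_num]
  exact radial_derivative_Hminushalf_bound_general (E := E3) (by simp) (by norm_num) g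
end
end

section
/- There is a constant C > 0 such that for every Schwartz function g : ℝ³ → ℂ, | ∫_{ℝ³} |g(y)|² ( ∫_{ℝ³} Im( conj(g(x)) ∇g(x) ) · (x−y)/|x−y| dx ) dy | ≤ C ‖g‖²_{L²(ℝ³)} ‖g‖²_{Ḣ^{1/2}(ℝ³)}. -/
open MeasureTheory Real Complex Filter
open scoped FourierTransform ContDiff ENNReal

noncomputable section

/-!
The Morawetz action centred at `y` is `∑ i, Im B_i(g, g)`, where `B_v(f, h) = ∫ V ⟪f, ∂_v h⟫` and
`V` is the component along `v` of the unit field `(x - y) / |x - y|`. Since `|V| ≤ |v|`, the form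
`B_v` is bounded on `L² × Ḣ¹`; since `|∂_v V| ≤ |v|² / |x - y|`, integrating by parts and applying
Hardy's inequality bounds it on `Ḣ¹ × L²` as well. The Hardy inequality itself comes from
integrating `|f|²` against the divergence of `(x - y) / |x - y|²`.

To interpolate, let `g_δ` be the smoothing of `g` at scale `δ`. Then `B_v(g, g)` is the telescoping
sum of `B_v(g_δ, g_δ) - B_v(g_{2δ}, g_{2δ})` over dyadic `δ`, each term is at most a constant times
`δ ‖g_δ‖²_{Ḣ¹}`, and these quantities add up to at most a multiple of `‖g‖²_{Ḣ^{1/2}}`.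
The resulting bound on the action is uniform in `y`, so it can be integrated against `|g(y)|²`.

Differentiating the singular field is avoided by replacing `|x - y|` with `√(ε² + |x - y|²)` and
letting `ε → 0` in the interpolated estimate.
-/

open scoped InnerProductSpace SchwartzMap LineDeriv

section ScalarEstimates

variable {a : ℝ}

lemma mul_inv_one_add_sq_le_one (a : ℝ) : a * (1 + a ^ 2)⁻¹ ≤ 1 := by
  rw [← div_eq_mul_inv, div_le_one (by positivity)]
  nlinarith [sq_nonneg (a - 1)]

lemma one_sub_inv_one_add_sq_le (ha : 0 ≤ a) : 1 - (1 + a ^ 2)⁻¹ ≤ a := by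
  have h : 1 - (1 + a ^ 2)⁻¹ = a * (a * (1 + a ^ 2)⁻¹) := by field_simp; ring
  rw [h]
  exact mul_le_of_le_one_right ha (mul_inv_one_add_sq_le_one a)

lemma inv_one_add_two_mul_sq_le (a : ℝ) : (1 + (2 * a) ^ 2)⁻¹ ≤ (1 + a ^ 2)⁻¹ := by
  gcongr 1
  nlinarith [sq_nonneg a]

lemma inv_one_add_sq_sub_le (ha : 0 ≤ a) :
    (1 + a ^ 2)⁻¹ - (1 + (2 * a) ^ 2)⁻¹ ≤ a * (1 + a ^ 2)⁻¹ := by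
  have h : (1 + a ^ 2)⁻¹ - (1 + (2 * a) ^ 2)⁻¹
      = a * (1 + a ^ 2)⁻¹ * (3 * a / (1 + (2 * a) ^ 2)) := by
    field_simp; ring
  rw [h]
  refine mul_le_of_le_one_right (by positivity) ?_
  rw [div_le_one (by positivity)]
  nlinarith [sq_nonneg (4 * a - 1)]

lemma mul_inv_one_add_sq_sq_le (ha : 0 ≤ a) :
    a * (1 + a ^ 2)⁻¹ ^ 2 ≤ 3 * (2 * a / (1 + 2 * a) - a / (1 + a)) := by
  have h : 2 * a / (1 + 2 * a) - a / (1 + a) = a * ((1 + a) * (1 + 2 * a))⁻¹ := by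
    field_simp; ring
  rw [h, mul_left_comm 3, inv_pow]
  gcongr
  rw [← div_eq_mul_inv, ← one_div, div_le_div_iff₀ (by positivity) (by positivity)]
  nlinarith [sq_nonneg (a - 1), sq_nonneg (a ^ 2)]

lemma sum_dyadic_mul_inv_one_add_sq_sq_le (ha : 0 ≤ a) (n : ℕ) :
    ∑ k ∈ Finset.range n, 2 ^ k * a * (1 + (2 ^ k * a) ^ 2)⁻¹ ^ 2 ≤ 3 := by
  let φ : ℕ → ℝ := fun k => 2 ^ k * a / (1 + 2 ^ k * a)
  have hφ0 : 0 ≤ φ 0 := by positivity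
  have hφn : φ n ≤ 1 := (div_le_one (by positivity)).2 (by linarith)
  calc ∑ k ∈ Finset.range n, 2 ^ k * a * (1 + (2 ^ k * a) ^ 2)⁻¹ ^ 2
      ≤ ∑ k ∈ Finset.range n, 3 * (φ (k + 1) - φ k) := by
        refine Finset.sum_le_sum fun k _ => ?_
        have h := mul_inv_one_add_sq_sq_le (a := 2 ^ k * a) (by positivity)
        rwa [← mul_assoc, ← pow_succ'] at h
    _ = 3 * (φ n - φ 0) := by rw [← Finset.mul_sum, Finset.sum_range_sub]
    _ ≤ 3 := by linarith

lemma abs_sub_two_mul_le {r s : ℝ} (hs : 0 ≤ s) (hsr : s ≤ r) : |r - 2 * s| ≤ r :=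
  abs_le.2 ⟨by linarith, by linarith⟩

end ScalarEstimates

section WeightedPairing

lemma integral_norm_mul_norm_le_sqrt_mul_sqrt {α G H : Type*} [MeasurableSpace α] {μ : Measure α}
    [NormedAddCommGroup G] [NormedAddCommGroup H] {u : α → G} {v : α → H}
    (hu : MemLp u 2 μ) (hv : MemLp v 2 μ) :
    ∫ x, ‖u x‖ * ‖v x‖ ∂μ ≤ √(∫ x, ‖u x‖ ^ 2 ∂μ) * √(∫ x, ‖v x‖ ^ 2 ∂μ) := by
  have h := integral_mul_norm_le_Lp_mul_Lq Real.HolderConjugate.two_two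
    (f := fun x => ‖u x‖) (g := fun x => ‖v x‖) (by simpa using hu.norm) (by simpa using hv.norm)
  simpa only [norm_norm, Real.rpow_two, ← Real.sqrt_eq_rpow] using h

variable {α F : Type*} [MeasurableSpace α] {μ : Measure α} [NormedAddCommGroup F]
  [InnerProductSpace ℂ F] {V W : α → ℝ} {f h : α → F} {c C : ℝ}

lemma memLp_two_smul (hW : Measurable W) (hWC : ∀ x, |W x| ≤ C) (hf : MemLp f 2 μ) :
    MemLp (fun x => W x • f x) 2 μ :=
  hf.of_le_mul (hW.aestronglyMeasurable.smul hf.aestronglyMeasurable)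
    (ae_of_all _ fun x => by
      simpa [norm_smul] using mul_le_mul_of_nonneg_right (hWC x) (norm_nonneg (f x)))

lemma integrable_smul_inner (hV : Measurable V) (hVC : ∀ x, |V x| ≤ C) (hf : MemLp f 2 μ)
    (hh : MemLp h 2 μ) : Integrable (fun x => V x • ⟪f x, h x⟫_ℂ) μ :=
  ((hf.norm.integrable_mul hh.norm).mono' (hf.aestronglyMeasurable.inner hh.aestronglyMeasurable)
    (ae_of_all _ fun x => norm_inner_le_norm (f x) (h x))).bdd_smul C hV.aestronglyMeasurable
      (ae_of_all _ hVC)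

lemma norm_integral_smul_inner_comm (V : α → ℝ) (f h : α → F) :
    ‖∫ x, V x • ⟪f x, h x⟫_ℂ ∂μ‖ = ‖∫ x, V x • ⟪h x, f x⟫_ℂ ∂μ‖ := by
  rw [← RCLike.norm_conj, ← integral_conj]
  simp [Complex.real_smul]

lemma norm_integral_smul_inner_le_sqrt_mul_sqrt (hc : 0 ≤ c) (hVW : ∀ x, |V x| ≤ c * |W x|)
    (hWf : MemLp (fun x => W x • f x) 2 μ) (hh : MemLp h 2 μ) :
    ‖∫ x, V x • ⟪f x, h x⟫_ℂ ∂μ‖ ≤ c * (√(∫ x, ‖W x • f x‖ ^ 2 ∂μ) * √(∫ x, ‖h x‖ ^ 2 ∂μ)) :=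
  calc ‖∫ x, V x • ⟪f x, h x⟫_ℂ ∂μ‖ ≤ ∫ x, c * (‖W x • f x‖ * ‖h x‖) ∂μ := by
        refine norm_integral_le_of_norm_le
          ((hWf.norm.integrable_mul hh.norm).const_mul c) (ae_of_all _ fun x => ?_)
        calc ‖V x • ⟪f x, h x⟫_ℂ‖ ≤ c * |W x| * (‖f x‖ * ‖h x‖) := by
              rw [norm_smul]
              gcongr
              exacts [hVW x, norm_inner_le_norm _ _]
          _ = c * (‖W x • f x‖ * ‖h x‖) := by rw [norm_smul, Real.norm_eq_abs]; ring
    _ ≤ c * (√(∫ x, ‖W x • f x‖ ^ 2 ∂μ) * √(∫ x, ‖h x‖ ^ 2 ∂μ)) := by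
        rw [integral_const_mul]
        gcongr
        exact integral_norm_mul_norm_le_sqrt_mul_sqrt hWf hh

end WeightedPairing

lemma hasTemperateGrowth_inv_one_add_norm_smul_sq {E : Type*} [NormedAddCommGroup E]
    [InnerProductSpace ℝ E] (δ : ℝ) :
    (fun ξ : E => (1 + ‖δ • ξ‖ ^ 2) ^ (-1 : ℝ)).HasTemperateGrowth :=
  (Function.hasTemperateGrowth_one_add_norm_sq_rpow E (-1)).comp
    (by fun_prop : (fun ξ : E => δ • ξ).HasTemperateGrowth)

lemma hasLineDerivAt_lineDerivOp {E F : Type*} [NormedAddCommGroup E] [NormedSpace ℝ E]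
    [NormedAddCommGroup F] [NormedSpace ℝ F] (f : 𝓢(E, F)) (v x : E) :
    HasLineDerivAt ℝ f (∂_{v} f x) x v := by
  rw [SchwartzMap.lineDerivOp_apply_eq_fderiv]
  exact f.differentiableAt.hasFDerivAt.hasLineDerivAt v

section SoftenedWeights

variable {E : Type*} [NormedAddCommGroup E]

/-- The softening `(ε² + |x - y|²)^{-1/2}` of the singular weight `1 / |x - y|`, smooth in `x` for
`ε ≠ 0` and equal to `1 / |x - y|` for `ε = 0`. -/
def softInvDist (ε : ℝ) (y x : E) : ℝ := (√(ε ^ 2 + ‖x - y‖ ^ 2))⁻¹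

variable {ε : ℝ} {y x : E}

lemma softInvDist_nonneg : 0 ≤ softInvDist ε y x := inv_nonneg.2 (Real.sqrt_nonneg _)

lemma softInvDist_le (hε : ε ≠ 0) : softInvDist ε y x ≤ |ε|⁻¹ := by
  have := abs_pos.2 hε
  unfold softInvDist
  gcongr
  exact Real.abs_le_sqrt (le_add_of_nonneg_right (sq_nonneg _))

lemma softInvDist_zero : softInvDist 0 y x = ‖x - y‖⁻¹ := by simp [softInvDist]

lemma measurable_softInvDist [MeasurableSpace E] [BorelSpace E] : Measurable (softInvDist ε y) := by
  unfold softInvDist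
  fun_prop

lemma norm_sub_mul_softInvDist_le_one : ‖x - y‖ * softInvDist ε y x ≤ 1 := by
  rw [softInvDist, ← div_eq_mul_inv]
  exact div_le_one_of_le₀ (Real.le_sqrt_of_sq_le (by simp [sq_nonneg])) (Real.sqrt_nonneg _)

variable [InnerProductSpace ℝ E] {v : E}

/-- The component in direction `v` of the softening of the radial unit vector field
`(x - y) / |x - y|`. -/
def softRadial (ε : ℝ) (y v x : E) : ℝ := ⟪x - y, v⟫_ℝ * softInvDist ε y x

lemma measurable_softRadial [MeasurableSpace E] [BorelSpace E] :
    Measurable (softRadial ε y v) :=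
  (by fun_prop : Continuous fun x : E => ⟪x - y, v⟫_ℝ).measurable.mul measurable_softInvDist

lemma abs_softRadial_le : |softRadial ε y v x| ≤ ‖v‖ :=
  calc |softRadial ε y v x| = |⟪x - y, v⟫_ℝ| * softInvDist ε y x := by
        rw [softRadial, abs_mul, abs_of_nonneg softInvDist_nonneg]
    _ ≤ ‖x - y‖ * ‖v‖ * softInvDist ε y x :=
        mul_le_mul_of_nonneg_right (abs_real_inner_le_norm _ _) softInvDist_nonneg
    _ = ‖v‖ * (‖x - y‖ * softInvDist ε y x) := by ring
    _ ≤ ‖v‖ := mul_le_of_le_one_right (norm_nonneg v) norm_sub_mul_softInvDist_le_one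

lemma sq_softRadial_le : softRadial ε y v x ^ 2 ≤ ‖v‖ ^ 2 :=
  sq_le_sq.2 (abs_softRadial_le.trans (le_abs_self _))

lemma abs_softRadial_mul_softInvDist_le :
    |softRadial ε y v x * softInvDist ε y x| ≤ ‖v‖ * softInvDist ε y x := by
  rw [abs_mul, abs_of_nonneg softInvDist_nonneg]
  exact mul_le_mul_of_nonneg_right abs_softRadial_le softInvDist_nonneg

lemma continuous_softRadial_softening : Continuous fun ε : ℝ => softRadial ε y v x := by
  rcases eq_or_ne x y with rfl | hxy
  · simpa [softRadial] using continuous_const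
  · have hne (ε : ℝ) : √(ε ^ 2 + ‖x - y‖ ^ 2) ≠ 0 := by
      have := norm_pos_iff.2 (sub_ne_zero.2 hxy)
      positivity
    exact continuous_const.mul (Continuous.inv₀ (by fun_prop) hne)

lemma hasLineDerivAt_softInvDist (hε : ε ≠ 0) :
    HasLineDerivAt ℝ (softInvDist ε y) (-(⟪x - y, v⟫_ℝ * softInvDist ε y x ^ 3)) x v := by
  have hline : HasDerivAt (fun t : ℝ => x + t • v - y) v 0 := by
    simpa using (((hasDerivAt_id (0 : ℝ)).smul_const v).const_add x).sub_const y
  have hpos : 0 < ε ^ 2 + ‖x + (0 : ℝ) • v - y‖ ^ 2 := by positivity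
  refine (((hline.norm_sq.const_add (ε ^ 2)).sqrt hpos.ne').inv
    (Real.sqrt_pos.2 hpos).ne').congr_deriv ?_
  have hne : √(ε ^ 2 + ‖x - y‖ ^ 2) ≠ 0 := by positivity
  simp only [zero_smul, add_zero, softInvDist]
  field_simp

lemma hasLineDerivAt_softRadial (hε : ε ≠ 0) :
    HasLineDerivAt ℝ (softRadial ε y v)
      ((‖v‖ ^ 2 - softRadial ε y v x ^ 2) * softInvDist ε y x) x v := by
  have hline : HasDerivAt (fun t : ℝ => ⟪x + t • v - y, v⟫_ℝ) (‖v‖ ^ 2) 0 := by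
    have h := (((hasDerivAt_id (0 : ℝ)).smul_const v).const_add x).sub_const y
    simpa using h.inner ℝ (hasDerivAt_const 0 v)
  refine (hline.mul (hasLineDerivAt_softInvDist (v := v) hε)).congr_deriv ?_
  simp only [zero_smul, add_zero, softRadial]
  ring

lemma hasLineDerivAt_softRadial_mul_softInvDist (hε : ε ≠ 0) :
    HasLineDerivAt ℝ (fun x => softRadial ε y v x * softInvDist ε y x)
      ((‖v‖ ^ 2 - 2 * softRadial ε y v x ^ 2) * softInvDist ε y x ^ 2) x v := by
  refine (HasDerivAt.mul (hasLineDerivAt_softRadial (x := x) (v := v) hε)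
    (hasLineDerivAt_softInvDist (v := v) hε)).congr_deriv ?_
  simp only [zero_smul, add_zero, softRadial]
  ring

lemma sum_sq_softRadial_le_one {ι : Type*} [Fintype ι] (b : OrthonormalBasis ι ℝ E) :
    ∑ i, softRadial ε y (b i) x ^ 2 ≤ 1 := by
  simp only [softRadial, mul_pow, ← Finset.sum_mul, b.sum_sq_inner_left]
  rw [← mul_pow]
  exact pow_le_one₀ (mul_nonneg (norm_nonneg _) softInvDist_nonneg) norm_sub_mul_softInvDist_le_one

end SoftenedWeights

/-- The constant in Hardy's inequality `hardyNorm_le`. It is not sharp. -/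
def hardyConst (E : Type*) [NormedAddCommGroup E] [InnerProductSpace ℝ E] : ℝ :=
  4 * π * Module.finrank ℝ E / (Module.finrank ℝ E - 2)

lemma hardyConst_nonneg {E : Type*} [NormedAddCommGroup E] [InnerProductSpace ℝ E]
    (hE : 2 < Module.finrank ℝ E) : 0 ≤ hardyConst E := by
  have hd : (2 : ℝ) < Module.finrank ℝ E := by exact_mod_cast hE
  exact div_nonneg (by positivity) (by linarith)

variable {E F : Type*} [NormedAddCommGroup E] [InnerProductSpace ℝ E] [FiniteDimensional ℝ E]
  [MeasurableSpace E] [BorelSpace E] [NormedAddCommGroup F] [InnerProductSpace ℂ F]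

section SobolevNorm

/-- The homogeneous Sobolev norm `‖f‖_{Ḣ^s}`, in the normalization `∫ |ξ|^{2s} |𝓕 f(ξ)|² dξ` of its
square, without factors of `2π`. -/
def sobolevNorm (s : ℝ) (f : 𝓢(E, F)) : ℝ := √(∫ ξ, (‖ξ‖ ^ s * ‖𝓕 f ξ‖) ^ 2)

lemma sobolevNorm_nonneg (s : ℝ) (f : 𝓢(E, F)) : 0 ≤ sobolevNorm s f := Real.sqrt_nonneg _

lemma sobolevNorm_sq (s : ℝ) (f : 𝓢(E, F)) :
    sobolevNorm s f ^ 2 = ∫ ξ, (‖ξ‖ ^ s * ‖𝓕 f ξ‖) ^ 2 :=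
  Real.sq_sqrt (integral_nonneg fun _ => sq_nonneg _)

lemma sobolevNorm_zero_right (s : ℝ) : sobolevNorm s (0 : 𝓢(E, F)) = 0 := by
  have h : 𝓕 (0 : 𝓢(E, F)) = 0 := map_zero (FourierTransform.fourierCLM ℂ 𝓢(E, F))
  simp [sobolevNorm, h]

lemma sobolevNorm_zero_eq_sqrt_integral [CompleteSpace F] (f : 𝓢(E, F)) :
    sobolevNorm 0 f = √(∫ x, ‖f x‖ ^ 2) := by
  simp [sobolevNorm, SchwartzMap.integral_norm_sq_fourier]

lemma rpow_le_one_add_pow_ceil {r s : ℝ} (hr : 0 ≤ r) (hs : 0 ≤ s) : r ^ s ≤ 1 + r ^ ⌈s⌉₊ := by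
  rcases le_total r 1 with h | h
  · exact (Real.rpow_le_one hr h hs).trans (le_add_of_nonneg_right (by positivity))
  · calc r ^ s ≤ r ^ (⌈s⌉₊ : ℝ) := Real.rpow_le_rpow_of_exponent_le h (Nat.le_ceil s)
      _ ≤ 1 + r ^ ⌈s⌉₊ := by rw [Real.rpow_natCast]; linarith

lemma integrable_sq_rpow_mul_norm {s : ℝ} (hs : 0 ≤ s) (f : 𝓢(E, F)) :
    Integrable fun x => (‖x‖ ^ s * ‖f x‖) ^ 2 := by
  let n := ⌈s⌉₊
  have hmeas : AEStronglyMeasurable (fun x => ‖x‖ ^ s * ‖f x‖) volume :=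
    ((continuous_norm.rpow_const fun _ => Or.inr hs).mul f.continuous.norm).aestronglyMeasurable
  obtain ⟨C, -, hC⟩ := f.decay n 0
  obtain ⟨D, -, hD⟩ := f.decay 0 0
  simp only [norm_iteratedFDeriv_zero, pow_zero, one_mul] at hC hD
  have hbound : ∀ x, ‖x‖ ^ s * ‖f x‖ ≤ ‖f x‖ + ‖x‖ ^ n * ‖f x‖ := fun x => by
    have h := rpow_le_one_add_pow_ceil (norm_nonneg x) hs
    calc ‖x‖ ^ s * ‖f x‖ ≤ (1 + ‖x‖ ^ n) * ‖f x‖ := by gcongr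
      _ = _ := by ring
  have hint : Integrable (fun x => ‖x‖ ^ s * ‖f x‖) :=
    (f.integrable.norm.add (f.integrable_pow_mul volume n)).mono' hmeas
      (ae_of_all _ fun x => (Real.norm_of_nonneg (by positivity)).trans_le (hbound x))
  simp only [sq]
  exact hint.bdd_mul (c := D + C) hmeas (ae_of_all _ fun x =>
    (Real.norm_of_nonneg (by positivity)).trans_le ((hbound x).trans (add_le_add (hD x) (hC x))))

lemma sobolevNorm_le_mul {s t c : ℝ} (ht : 0 ≤ t) (hc : 0 ≤ c) {f h : 𝓢(E, F)}
    (hfh : ∀ ξ, ‖ξ‖ ^ s * ‖𝓕 f ξ‖ ≤ c * (‖ξ‖ ^ t * ‖𝓕 h ξ‖)) :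
    sobolevNorm s f ≤ c * sobolevNorm t h := by
  refine Real.sqrt_le_iff.2 ⟨mul_nonneg hc (sobolevNorm_nonneg t h), ?_⟩
  rw [mul_pow, sobolevNorm_sq, ← integral_const_mul]
  refine integral_mono_of_nonneg (ae_of_all _ fun ξ => sq_nonneg _)
    ((integrable_sq_rpow_mul_norm ht (𝓕 h)).const_mul _) (ae_of_all _ fun ξ => ?_)
  simp only [← mul_pow c]
  exact pow_le_pow_left₀ (by positivity) (hfh ξ) 2

lemma fourier_sub_apply (f h : 𝓢(E, F)) (ξ : E) : 𝓕 (f - h) ξ = 𝓕 f ξ - 𝓕 h ξ :=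
  DFunLike.congr_fun (map_sub (FourierTransform.fourierCLM ℂ 𝓢(E, F)) f h) ξ

lemma norm_fourier_lineDerivOp_le (v : E) (f : 𝓢(E, F)) (ξ : E) :
    ‖𝓕 (∂_{v} f) ξ‖ ≤ 2 * π * ‖v‖ * (‖ξ‖ * ‖𝓕 f ξ‖) := by
  have hv : (fun x : E => inner ℝ x v).HasTemperateGrowth := by fun_prop
  rw [SchwartzMap.fourier_lineDerivOp_eq, smul_apply,
    SchwartzMap.smulLeftCLM_apply_apply hv, norm_smul, norm_smul]
  have h2π : ‖2 * (π : ℂ) * Complex.I‖ = 2 * π := by simp [abs_of_pos Real.pi_pos]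
  calc ‖2 * (π : ℂ) * Complex.I‖ * (‖inner ℝ ξ v‖ * ‖𝓕 f ξ‖)
      ≤ 2 * π * (‖ξ‖ * ‖v‖ * ‖𝓕 f ξ‖) := by
        rw [h2π]
        gcongr
        exact norm_inner_le_norm ξ v
    _ = 2 * π * ‖v‖ * (‖ξ‖ * ‖𝓕 f ξ‖) := by ring

lemma sobolevNorm_zero_lineDerivOp_le (v : E) (f : 𝓢(E, F)) :
    sobolevNorm 0 (∂_{v} f) ≤ 2 * π * ‖v‖ * sobolevNorm 1 f :=
  sobolevNorm_le_mul zero_le_one (by positivity) fun ξ => by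
    simpa using norm_fourier_lineDerivOp_le v f ξ

end SobolevNorm

section Smoothing

variable [CompleteSpace F]

/-- Smoothing at length scale `δ`: up to the normalization of `δ`, the resolvent `(1 - δ² Δ)⁻¹`.
Its symbol decays like `|ξ|⁻²` only, but unlike that of the Poisson semigroup it is smooth at the
origin, so that Schwartz functions are preserved. -/
def smoothing (δ : ℝ) (f : 𝓢(E, F)) : 𝓢(E, F) :=
  SchwartzMap.fourierMultiplierCLM F (fun ξ : E => (1 + ‖δ • ξ‖ ^ 2) ^ (-1 : ℝ)) f

lemma fourier_smoothing_apply (δ : ℝ) (f : 𝓢(E, F)) (ξ : E) :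
    𝓕 (smoothing δ f) ξ = (1 + (δ * ‖ξ‖) ^ 2)⁻¹ • 𝓕 f ξ := by
  rw [smoothing, SchwartzMap.fourierMultiplierCLM_apply, FourierTransform.fourier_fourierInv_eq,
    SchwartzMap.smulLeftCLM_apply_apply (hasTemperateGrowth_inv_one_add_norm_smul_sq δ),
    Real.rpow_neg_one, norm_smul, mul_pow, mul_pow, Real.norm_eq_abs, sq_abs]

lemma norm_fourier_smoothing (δ : ℝ) (f : 𝓢(E, F)) (ξ : E) :
    ‖𝓕 (smoothing δ f) ξ‖ = (1 + (δ * ‖ξ‖) ^ 2)⁻¹ * ‖𝓕 f ξ‖ := by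
  rw [fourier_smoothing_apply, norm_smul, Real.norm_of_nonneg (by positivity)]

lemma sobolevNorm_smoothing_le {s : ℝ} (hs : 0 ≤ s) (δ : ℝ) (f : 𝓢(E, F)) :
    sobolevNorm s (smoothing δ f) ≤ sobolevNorm s f := by
  rw [← one_mul (sobolevNorm s f)]
  refine sobolevNorm_le_mul hs zero_le_one fun ξ => ?_
  rw [norm_fourier_smoothing, one_mul]
  gcongr
  exact mul_le_of_le_one_left (norm_nonneg _) (inv_le_one_of_one_le₀ (by simp [sq_nonneg]))

lemma sobolevNorm_one_smoothing_le {δ : ℝ} (hδ : 0 < δ) (f : 𝓢(E, F)) :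
    sobolevNorm 1 (smoothing δ f) ≤ δ⁻¹ * sobolevNorm 0 f := by
  refine sobolevNorm_le_mul le_rfl (by positivity) fun ξ => ?_
  rw [norm_fourier_smoothing, Real.rpow_one, Real.rpow_zero, one_mul]
  calc ‖ξ‖ * ((1 + (δ * ‖ξ‖) ^ 2)⁻¹ * ‖𝓕 f ξ‖)
      = δ⁻¹ * (δ * ‖ξ‖ * (1 + (δ * ‖ξ‖) ^ 2)⁻¹ * ‖𝓕 f ξ‖) := by field_simp
    _ ≤ δ⁻¹ * ‖𝓕 f ξ‖ := by
        gcongr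
        exact mul_le_of_le_one_left (norm_nonneg _) (mul_inv_one_add_sq_le_one _)

lemma sobolevNorm_zero_sub_smoothing_le {δ : ℝ} (hδ : 0 ≤ δ) (f : 𝓢(E, F)) :
    sobolevNorm 0 (f - smoothing δ f) ≤ δ * sobolevNorm 1 f := by
  refine sobolevNorm_le_mul zero_le_one hδ fun ξ => ?_
  have hm : (1 + (δ * ‖ξ‖) ^ 2)⁻¹ ≤ 1 := inv_le_one_of_one_le₀ (by simp [sq_nonneg])
  have hsub : 𝓕 (f - smoothing δ f) ξ = (1 - (1 + (δ * ‖ξ‖) ^ 2)⁻¹) • 𝓕 f ξ := by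
    rw [fourier_sub_apply, fourier_smoothing_apply, sub_smul, one_smul]
  rw [hsub, norm_smul, Real.norm_of_nonneg (sub_nonneg.2 hm), Real.rpow_zero, one_mul,
    Real.rpow_one, ← mul_assoc]
  gcongr
  exact one_sub_inv_one_add_sq_le (by positivity)

lemma sobolevNorm_zero_smoothing_sub_smoothing_le {δ : ℝ} (hδ : 0 ≤ δ) (f : 𝓢(E, F)) :
    sobolevNorm 0 (smoothing δ f - smoothing (2 * δ) f) ≤ δ * sobolevNorm 1 (smoothing δ f) := by
  refine sobolevNorm_le_mul zero_le_one hδ fun ξ => ?_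
  have hsub : 𝓕 (smoothing δ f - smoothing (2 * δ) f) ξ
      = ((1 + (δ * ‖ξ‖) ^ 2)⁻¹ - (1 + (2 * (δ * ‖ξ‖)) ^ 2)⁻¹) • 𝓕 f ξ := by
    rw [fourier_sub_apply, fourier_smoothing_apply, fourier_smoothing_apply, sub_smul, mul_assoc]
  rw [hsub, norm_smul, Real.norm_of_nonneg (sub_nonneg.2 (inv_one_add_two_mul_sq_le _)),
    norm_fourier_smoothing, Real.rpow_zero, one_mul, Real.rpow_one]
  exact (mul_le_mul_of_nonneg_right (inv_one_add_sq_sub_le (by positivity))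
    (norm_nonneg _)).trans_eq (by ring)

lemma sobolevNorm_one_smoothing_two_mul_le (δ : ℝ) (f : 𝓢(E, F)) :
    sobolevNorm 1 (smoothing (2 * δ) f) ≤ sobolevNorm 1 (smoothing δ f) := by
  rw [← one_mul (sobolevNorm 1 (smoothing δ f))]
  refine sobolevNorm_le_mul zero_le_one zero_le_one fun ξ => ?_
  rw [norm_fourier_smoothing, norm_fourier_smoothing, one_mul, mul_assoc]
  gcongr ‖ξ‖ ^ (1 : ℝ) * (?_ * ‖𝓕 f ξ‖)
  exact inv_one_add_two_mul_sq_le _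

lemma sum_dyadic_sobolevNorm_one_smoothing_sq_le {δ : ℝ} (hδ : 0 ≤ δ) (f : 𝓢(E, F)) (n : ℕ) :
    ∑ k ∈ Finset.range n, 2 ^ k * δ * sobolevNorm 1 (smoothing (2 ^ k * δ) f) ^ 2
      ≤ 3 * sobolevNorm (1 / 2) f ^ 2 := by
  simp only [sobolevNorm_sq, ← integral_const_mul]
  have hint (k : ℕ) := (integrable_sq_rpow_mul_norm zero_le_one
    (𝓕 (smoothing (2 ^ k * δ) f))).const_mul (2 ^ k * δ)
  rw [← integral_finsetSum _ fun k _ => hint k]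
  refine integral_mono (integrable_finsetSum _ fun k _ => hint k)
    ((integrable_sq_rpow_mul_norm (by norm_num) (𝓕 f)).const_mul 3) fun ξ => ?_
  have hhalf : (‖ξ‖ ^ (1 / 2 : ℝ)) ^ 2 = ‖ξ‖ := by
    rw [← Real.sqrt_eq_rpow, Real.sq_sqrt (norm_nonneg ξ)]
  calc ∑ k ∈ Finset.range n, 2 ^ k * δ * (‖ξ‖ ^ (1 : ℝ) * ‖𝓕 (smoothing (2 ^ k * δ) f) ξ‖) ^ 2
      = (∑ k ∈ Finset.range n,
          2 ^ k * (δ * ‖ξ‖) * (1 + (2 ^ k * (δ * ‖ξ‖)) ^ 2)⁻¹ ^ 2) * (‖ξ‖ * ‖𝓕 f ξ‖ ^ 2) := by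
        rw [Finset.sum_mul]
        refine Finset.sum_congr rfl fun k _ => ?_
        rw [norm_fourier_smoothing, Real.rpow_one]
        ring
    _ ≤ 3 * (‖ξ‖ * ‖𝓕 f ξ‖ ^ 2) := by
        gcongr
        exact sum_dyadic_mul_inv_one_add_sq_sq_le (by positivity) n
    _ = 3 * (‖ξ‖ ^ (1 / 2 : ℝ) * ‖𝓕 f ξ‖) ^ 2 := by rw [mul_pow, hhalf]

end Smoothing

section Interpolation

variable [CompleteSpace F] {G : Type*} [NormedAddCommGroup G] {A : ℝ} {M : 𝓢(E, F) → G}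

lemma norm_smoothing_sub_smoothing_two_pow_le (hA : 0 ≤ A)
    (hM : ∀ f h, ‖M f - M h‖ ≤ A * sobolevNorm 0 (f - h) * (sobolevNorm 1 f + sobolevNorm 1 h))
    {δ : ℝ} (hδ : 0 ≤ δ) (g : 𝓢(E, F)) (n : ℕ) :
    ‖M (smoothing δ g) - M (smoothing (2 ^ n * δ) g)‖ ≤ 6 * A * sobolevNorm (1 / 2) g ^ 2 := by
  let g' : ℕ → 𝓢(E, F) := fun k => smoothing (2 ^ k * δ) g
  have hstep (k : ℕ) :
      dist (M (g' k)) (M (g' (k + 1))) ≤ 2 * A * (2 ^ k * δ * sobolevNorm 1 (g' k) ^ 2) := by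
    have hsucc : g' (k + 1) = smoothing (2 * (2 ^ k * δ)) g := by
      simp only [g', pow_succ', mul_assoc]
    rw [dist_eq_norm]
    calc ‖M (g' k) - M (g' (k + 1))‖
        ≤ A * sobolevNorm 0 (g' k - g' (k + 1))
            * (sobolevNorm 1 (g' k) + sobolevNorm 1 (g' (k + 1))) := hM _ _
      _ ≤ A * (2 ^ k * δ * sobolevNorm 1 (g' k))
            * (sobolevNorm 1 (g' k) + sobolevNorm 1 (g' k)) := by
          rw [hsucc]
          have := sobolevNorm_nonneg 1 (g' k)
          have := sobolevNorm_nonneg 1 (smoothing (2 * (2 ^ k * δ)) g)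
          gcongr
          · exact sobolevNorm_zero_smoothing_sub_smoothing_le (by positivity) g
          · exact sobolevNorm_one_smoothing_two_mul_le _ g
      _ = 2 * A * (2 ^ k * δ * sobolevNorm 1 (g' k) ^ 2) := by ring
  calc ‖M (smoothing δ g) - M (smoothing (2 ^ n * δ) g)‖
      = dist (M (g' 0)) (M (g' n)) := by simp only [g', dist_eq_norm, pow_zero, one_mul]
    _ ≤ ∑ k ∈ Finset.range n, 2 * A * (2 ^ k * δ * sobolevNorm 1 (g' k) ^ 2) :=
        (dist_le_range_sum_dist (fun k => M (g' k)) n).trans (Finset.sum_le_sum fun k _ => hstep k)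
    _ ≤ 2 * A * (3 * sobolevNorm (1 / 2) g ^ 2) := by
        rw [← Finset.mul_sum]
        gcongr
        exact sum_dyadic_sobolevNorm_one_smoothing_sq_le hδ g n
    _ = 6 * A * sobolevNorm (1 / 2) g ^ 2 := by ring

lemma tendsto_smoothing_atTop (hA : 0 ≤ A) (hM₀ : M 0 = 0)
    (hM : ∀ f h, ‖M f - M h‖ ≤ A * sobolevNorm 0 (f - h) * (sobolevNorm 1 f + sobolevNorm 1 h))
    (g : 𝓢(E, F)) : Tendsto (fun δ : ℝ => M (smoothing δ g)) atTop (nhds 0) := by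
  refine squeeze_zero_norm' (a := fun δ => δ⁻¹ * (A * sobolevNorm 0 g ^ 2)) ?_
    (by simpa using tendsto_inv_atTop_zero.mul_const (A * sobolevNorm 0 g ^ 2))
  filter_upwards [eventually_gt_atTop 0] with δ hδ
  have h := hM (smoothing δ g) 0
  rw [hM₀, sub_zero, sub_zero, sobolevNorm_zero_right, add_zero] at h
  calc ‖M (smoothing δ g)‖
      ≤ A * sobolevNorm 0 (smoothing δ g) * sobolevNorm 1 (smoothing δ g) := h
    _ ≤ A * sobolevNorm 0 g * (δ⁻¹ * sobolevNorm 0 g) := by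
        have := sobolevNorm_nonneg 0 g
        have := sobolevNorm_nonneg 1 (smoothing δ g)
        gcongr
        · exact sobolevNorm_smoothing_le le_rfl δ g
        · exact sobolevNorm_one_smoothing_le hδ g
    _ = δ⁻¹ * (A * sobolevNorm 0 g ^ 2) := by ring

lemma tendsto_smoothing_nhdsGT_zero (hA : 0 ≤ A)
    (hM : ∀ f h, ‖M f - M h‖ ≤ A * sobolevNorm 0 (f - h) * (sobolevNorm 1 f + sobolevNorm 1 h))
    (g : 𝓢(E, F)) :
    Tendsto (fun δ : ℝ => M (smoothing δ g)) (nhdsWithin 0 (Set.Ioi 0)) (nhds (M g)) := by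
  have hlim : Tendsto (fun δ : ℝ => δ * (2 * A * sobolevNorm 1 g ^ 2))
      (nhdsWithin 0 (Set.Ioi 0)) (nhds 0) := by
    have h := (tendsto_id (x := nhds (0 : ℝ))).mul_const (2 * A * sobolevNorm 1 g ^ 2)
    rw [zero_mul] at h
    exact h.mono_left nhdsWithin_le_nhds
  refine tendsto_iff_norm_sub_tendsto_zero.2
    (squeeze_zero' (.of_forall fun _ => norm_nonneg _) ?_ hlim)
  filter_upwards [self_mem_nhdsWithin] with δ hδ
  rw [norm_sub_rev]
  calc ‖M g - M (smoothing δ g)‖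
      ≤ A * sobolevNorm 0 (g - smoothing δ g) * (sobolevNorm 1 g + sobolevNorm 1 (smoothing δ g)) :=
        hM _ _
    _ ≤ A * (δ * sobolevNorm 1 g) * (sobolevNorm 1 g + sobolevNorm 1 g) := by
        have := sobolevNorm_nonneg 1 g
        have := sobolevNorm_nonneg 1 (smoothing δ g)
        have hδ₀ : 0 ≤ δ := (Set.mem_Ioi.1 hδ).le
        gcongr
        · exact sobolevNorm_zero_sub_smoothing_le hδ₀ g
        · exact sobolevNorm_smoothing_le zero_le_one δ g
    _ = δ * (2 * A * sobolevNorm 1 g ^ 2) := by ring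

theorem norm_le_mul_sobolevNorm_half_sq (hA : 0 ≤ A) (hM₀ : M 0 = 0)
    (hM : ∀ f h, ‖M f - M h‖ ≤ A * sobolevNorm 0 (f - h) * (sobolevNorm 1 f + sobolevNorm 1 h))
    (g : 𝓢(E, F)) : ‖M g‖ ≤ 6 * A * sobolevNorm (1 / 2) g ^ 2 := by
  have hsmooth (δ : ℝ) (hδ : 0 < δ) : ‖M (smoothing δ g)‖ ≤ 6 * A * sobolevNorm (1 / 2) g ^ 2 := by
    have hscale : Tendsto (fun n : ℕ => 2 ^ n * δ) atTop atTop :=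
      (tendsto_pow_atTop_atTop_of_one_lt one_lt_two).atTop_mul_const hδ
    have hlim := ((tendsto_smoothing_atTop hA hM₀ hM g).comp hscale).const_sub (M (smoothing δ g))
    rw [sub_zero] at hlim
    exact le_of_tendsto' hlim.norm (norm_smoothing_sub_smoothing_two_pow_le hA hM hδ.le g)
  refine le_of_tendsto (tendsto_smoothing_nhdsGT_zero hA hM g).norm ?_
  filter_upwards [self_mem_nhdsWithin] with δ hδ using hsmooth δ hδ

end Interpolation

section SchwartzPairing

variable {V V' : E → ℝ} {c C C' : ℝ} {v : E}

lemma norm_integral_smul_inner_le [CompleteSpace F] (hc : 0 ≤ c) (hV : ∀ x, |V x| ≤ c)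
    (f h : 𝓢(E, F)) :
    ‖∫ x, V x • ⟪f x, h x⟫_ℂ‖ ≤ c * (sobolevNorm 0 f * sobolevNorm 0 h) := by
  simpa [sobolevNorm_zero_eq_sqrt_integral] using norm_integral_smul_inner_le_sqrt_mul_sqrt
    (W := 1) hc (by simpa using hV) (by simpa using f.memLp 2) (h.memLp 2 volume)

lemma integral_smul_inner_lineDerivOp (hV : Measurable V) (hV' : Measurable V')
    (hVC : ∀ x, |V x| ≤ C) (hVC' : ∀ x, |V' x| ≤ C') (hVV' : ∀ x, HasLineDerivAt ℝ V (V' x) x v)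
    (f h : 𝓢(E, F)) :
    ∫ x, V x • ⟪f x, ∂_{v} h x⟫_ℂ
      = -(∫ x, V x • ⟪∂_{v} f x, h x⟫_ℂ) - ∫ x, V' x • ⟪f x, h x⟫_ℂ := by
  have hright := integrable_smul_inner hV hVC (f.memLp 2 volume) ((∂_{v} h).memLp 2)
  have hleft := integrable_smul_inner hV hVC ((∂_{v} f).memLp 2 volume) (h.memLp 2)
  have hinner (x : E) : HasLineDerivAt ℝ (fun x => ⟪f x, h x⟫_ℂ)
      (⟪f x, ∂_{v} h x⟫_ℂ + ⟪∂_{v} f x, h x⟫_ℂ) x v := by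
    simpa [HasLineDerivAt] using HasDerivAt.inner ℂ
      (hasLineDerivAt_lineDerivOp f v x) (hasLineDerivAt_lineDerivOp h v x)
  have key := integral_bilinear_hasLineDerivAt_right_eq_neg_left_of_integrable
    (μ := volume) (B := ContinuousLinearMap.lsmul ℝ ℝ)
    (by simpa using integrable_smul_inner hV' hVC' (f.memLp 2 volume) (h.memLp 2))
    (by simpa only [ContinuousLinearMap.lsmul_apply, smul_add] using! hright.add hleft)
    (by simpa using integrable_smul_inner hV hVC (f.memLp 2 volume) (h.memLp 2))
    (fun x _ => hVV' x) (fun x _ => hinner x)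
  simp only [ContinuousLinearMap.lsmul_apply, smul_add] at key
  rw [integral_add hright hleft] at key
  linear_combination key

end SchwartzPairing

section Hardy

variable {ε : ℝ}

lemma integral_hardyWeight_mul_norm_sq (hε : ε ≠ 0) (y v : E) (f : 𝓢(E, F)) :
    ((∫ x, (‖v‖ ^ 2 - 2 * softRadial ε y v x ^ 2) * ‖softInvDist ε y x • f x‖ ^ 2 : ℝ) : ℂ)
      = -(∫ x, (softRadial ε y v x * softInvDist ε y x) • ⟪∂_{v} f x, f x⟫_ℂ)
        - ∫ x, (softRadial ε y v x * softInvDist ε y x) • ⟪f x, ∂_{v} f x⟫_ℂ := by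
  let V' : E → ℝ := fun x => (‖v‖ ^ 2 - 2 * softRadial ε y v x ^ 2) * softInvDist ε y x ^ 2
  have hV' (x : E) : |V' x| ≤ ‖v‖ ^ 2 * |ε|⁻¹ ^ 2 := by
    rw [abs_mul, abs_of_nonneg (sq_nonneg (softInvDist ε y x))]
    gcongr
    exacts [abs_sub_two_mul_le (sq_nonneg _) sq_softRadial_le, softInvDist_nonneg,
      softInvDist_le hε]
  have hmeas : Measurable (softRadial ε y v) := measurable_softRadial
  have hmeas' : Measurable (softInvDist ε y) := measurable_softInvDist
  have hparts := integral_smul_inner_lineDerivOp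
    (V := fun x => softRadial ε y v x * softInvDist ε y x) (V' := V') (hmeas.mul hmeas')
    (((hmeas.pow_const 2).const_mul 2).const_sub (‖v‖ ^ 2) |>.mul (hmeas'.pow_const 2))
    (fun x => abs_softRadial_mul_softInvDist_le.trans
      (mul_le_mul_of_nonneg_left (softInvDist_le hε) (norm_nonneg v)))
    hV' (fun x => hasLineDerivAt_softRadial_mul_softInvDist hε) f f
  have hself (x : E) : (((‖v‖ ^ 2 - 2 * softRadial ε y v x ^ 2)
      * ‖softInvDist ε y x • f x‖ ^ 2 : ℝ) : ℂ) = V' x • ⟪f x, f x⟫_ℂ := by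
    have hinner : ⟪f x, f x⟫_ℂ = ((‖f x‖ ^ 2 : ℝ) : ℂ) := by
      simp [inner_self_eq_norm_sq_to_K]
    rw [hinner, Complex.real_smul, ← Complex.ofReal_mul, norm_smul, mul_pow, Real.norm_eq_abs,
      sq_abs, mul_assoc]
  rw [← integral_complex_ofReal]
  simp only [hself]
  linear_combination hparts

/-- The weighted norm `‖f / |x - y|‖_{L²}` of Hardy's inequality, with softened weight. -/
def hardyNorm (ε : ℝ) (y : E) (f : 𝓢(E, F)) : ℝ := √(∫ x, ‖softInvDist ε y x • f x‖ ^ 2)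

lemma hardyNorm_nonneg (ε : ℝ) (y : E) (f : 𝓢(E, F)) : 0 ≤ hardyNorm ε y f := Real.sqrt_nonneg _

variable [CompleteSpace F]

lemma norm_integral_smul_inner_le_hardyNorm (hε : ε ≠ 0) {y : E} {V : E → ℝ} {c : ℝ} (hc : 0 ≤ c)
    (hV : ∀ x, |V x| ≤ c * softInvDist ε y x) (f h : 𝓢(E, F)) :
    ‖∫ x, V x • ⟪f x, h x⟫_ℂ‖ ≤ c * (hardyNorm ε y f * sobolevNorm 0 h) := by
  have habs (x : E) : |softInvDist ε y x| = softInvDist ε y x := abs_of_nonneg softInvDist_nonneg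
  rw [sobolevNorm_zero_eq_sqrt_integral]
  exact norm_integral_smul_inner_le_sqrt_mul_sqrt hc (by simpa only [habs] using hV)
    (memLp_two_smul measurable_softInvDist (fun x => (habs x).trans_le (softInvDist_le hε))
      (f.memLp 2)) (h.memLp 2)

lemma abs_integral_hardyWeight_mul_norm_sq_le (hε : ε ≠ 0) (y v : E) (f : 𝓢(E, F)) :
    |∫ x, (‖v‖ ^ 2 - 2 * softRadial ε y v x ^ 2) * ‖softInvDist ε y x • f x‖ ^ 2|
      ≤ 4 * π * ‖v‖ ^ 2 * hardyNorm ε y f * sobolevNorm 1 f := by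
  let V : E → ℝ := fun x => softRadial ε y v x * softInvDist ε y x
  have hpair := norm_integral_smul_inner_le_hardyNorm (V := V) (y := y) hε (norm_nonneg v)
    (fun _ => abs_softRadial_mul_softInvDist_le) f (∂_{v} f)
  calc |∫ x, (‖v‖ ^ 2 - 2 * softRadial ε y v x ^ 2) * ‖softInvDist ε y x • f x‖ ^ 2|
      ≤ ‖∫ x, V x • ⟪∂_{v} f x, f x⟫_ℂ‖ + ‖∫ x, V x • ⟪f x, ∂_{v} f x⟫_ℂ‖ := by
        rw [← Real.norm_eq_abs, ← Complex.norm_real, integral_hardyWeight_mul_norm_sq hε,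
          ← norm_neg (∫ x, V x • ⟪∂_{v} f x, f x⟫_ℂ)]
        exact norm_sub_le _ _
    _ ≤ 2 * (‖v‖ * (hardyNorm ε y f * sobolevNorm 0 (∂_{v} f))) := by
        rw [norm_integral_smul_inner_comm V (∂_{v} f : 𝓢(E, F)) f]
        linarith
    _ ≤ 2 * (‖v‖ * (hardyNorm ε y f * (2 * π * ‖v‖ * sobolevNorm 1 f))) := by
        gcongr
        exacts [hardyNorm_nonneg ε y f, sobolevNorm_zero_lineDerivOp_le v f]
    _ = 4 * π * ‖v‖ ^ 2 * hardyNorm ε y f * sobolevNorm 1 f := by ring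

lemma sub_two_mul_hardyNorm_sq_le (hε : ε ≠ 0) (y : E) (f : 𝓢(E, F)) :
    (Module.finrank ℝ E - 2) * hardyNorm ε y f ^ 2
      ≤ Module.finrank ℝ E * (4 * π * hardyNorm ε y f * sobolevNorm 1 f) := by
  let b := stdOrthonormalBasis ℝ E
  let u : E → ℝ := fun x => ‖softInvDist ε y x • f x‖ ^ 2
  have hbdd (x : E) : |softInvDist ε y x| ≤ |ε|⁻¹ :=
    (abs_of_nonneg softInvDist_nonneg).trans_le (softInvDist_le hε)
  have hu : Integrable u :=
    (memLp_two_smul measurable_softInvDist hbdd (f.memLp 2)).integrable_norm_pow two_ne_zero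
  have hsq : hardyNorm ε y f ^ 2 = ∫ x, u x := Real.sq_sqrt (integral_nonneg fun _ => sq_nonneg _)
  have hweight (i) : Integrable fun x => (‖b i‖ ^ 2 - 2 * softRadial ε y (b i) x ^ 2) * u x :=
    hu.bdd_mul (c := ‖b i‖ ^ 2)
      ((measurable_softRadial.pow_const 2).const_mul 2 |>.const_sub _).aestronglyMeasurable
      (ae_of_all _ fun x => abs_sub_two_mul_le (sq_nonneg _) sq_softRadial_le)
  calc (Module.finrank ℝ E - 2) * hardyNorm ε y f ^ 2
      = ∫ x, (Module.finrank ℝ E - 2) * u x := by rw [hsq, integral_const_mul]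
    _ ≤ ∫ x, ∑ i, (‖b i‖ ^ 2 - 2 * softRadial ε y (b i) x ^ 2) * u x := by
        refine integral_mono (hu.const_mul _) (integrable_finsetSum _ fun i _ => hweight i)
          fun x => ?_
        have hsum := sum_sq_softRadial_le_one (ε := ε) (y := y) (x := x) b
        simp only [← Finset.sum_mul, Finset.sum_sub_distrib, ← Finset.mul_sum, b.norm_eq_one,
          one_pow, Finset.sum_const, Finset.card_univ, Fintype.card_fin, nsmul_one]
        exact mul_le_mul_of_nonneg_right (by linarith) (sq_nonneg _)
    _ = ∑ i, ∫ x, (‖b i‖ ^ 2 - 2 * softRadial ε y (b i) x ^ 2) * u x :=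
        integral_finsetSum _ fun i _ => hweight i
    _ ≤ ∑ i, 4 * π * ‖b i‖ ^ 2 * hardyNorm ε y f * sobolevNorm 1 f :=
        Finset.sum_le_sum fun i _ => (le_abs_self _).trans
          (abs_integral_hardyWeight_mul_norm_sq_le hε y (b i) f)
    _ = Module.finrank ℝ E * (4 * π * hardyNorm ε y f * sobolevNorm 1 f) := by
        simp [b.norm_eq_one]

theorem hardyNorm_le (hE : 2 < Module.finrank ℝ E) (hε : ε ≠ 0) (y : E) (f : 𝓢(E, F)) :
    hardyNorm ε y f ≤ hardyConst E * sobolevNorm 1 f := by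
  rcases (hardyNorm_nonneg ε y f).eq_or_lt with hN | hN
  · rw [← hN]
    exact mul_nonneg (hardyConst_nonneg hE) (sobolevNorm_nonneg 1 f)
  · have hd : (2 : ℝ) < Module.finrank ℝ E := by exact_mod_cast hE
    have hcancel : (Module.finrank ℝ E - 2) * hardyNorm ε y f
        ≤ 4 * π * Module.finrank ℝ E * sobolevNorm 1 f :=
      le_of_mul_le_mul_right (by linarith [sub_two_mul_hardyNorm_sq_le hε y f]) hN
    rw [hardyConst, div_mul_eq_mul_div, le_div_iff₀ (sub_pos.2 hd)]
    linarith

end Hardy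

section MorawetzForm

variable {ε : ℝ}

/-- The sesquilinear form whose imaginary part on the diagonal is the Morawetz action centred at `y`
in direction `v`, with softened radial field. -/
def morawetzForm (ε : ℝ) (y v : E) (f h : 𝓢(E, F)) : ℂ :=
  ∫ x, softRadial ε y v x • ⟪f x, ∂_{v} h x⟫_ℂ

lemma integrable_morawetzForm (ε : ℝ) (y v : E) (f h : 𝓢(E, F)) :
    Integrable fun x => softRadial ε y v x • ⟪f x, ∂_{v} h x⟫_ℂ :=
  integrable_smul_inner measurable_softRadial (fun _ => abs_softRadial_le) (f.memLp 2)
    ((∂_{v} h).memLp 2)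

lemma morawetzForm_sub_left (ε : ℝ) (y v : E) (f₁ f₂ h : 𝓢(E, F)) :
    morawetzForm ε y v (f₁ - f₂) h = morawetzForm ε y v f₁ h - morawetzForm ε y v f₂ h := by
  simp only [morawetzForm]
  rw [← integral_sub (integrable_morawetzForm ..) (integrable_morawetzForm ..)]
  simp only [sub_apply, inner_sub_left, smul_sub]

lemma morawetzForm_sub_right (ε : ℝ) (y v : E) (f h₁ h₂ : 𝓢(E, F)) :
    morawetzForm ε y v f (h₁ - h₂) = morawetzForm ε y v f h₁ - morawetzForm ε y v f h₂ := by
  have hsub : ∂_{v} (h₁ - h₂) = ∂_{v} h₁ - ∂_{v} h₂ :=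
    map_sub (LineDeriv.lineDerivOpCLM ℝ 𝓢(E, F) v) h₁ h₂
  simp only [morawetzForm]
  rw [← integral_sub (integrable_morawetzForm ..) (integrable_morawetzForm ..)]
  simp only [hsub, sub_apply, inner_sub_right, smul_sub]

lemma continuous_morawetzForm_softening (y v : E) (f h : 𝓢(E, F)) :
    Continuous fun ε : ℝ => morawetzForm ε y v f h := by
  refine continuous_of_dominated (bound := fun x => ‖v‖ * ‖⟪f x, ∂_{v} h x⟫_ℂ‖)
    (fun ε => (integrable_morawetzForm ε y v f h).aestronglyMeasurable)
    (fun ε => ae_of_all _ fun x => ?_) ?_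
    (ae_of_all _ fun x => continuous_softRadial_softening.smul continuous_const)
  · rw [norm_smul]
    exact mul_le_mul_of_nonneg_right abs_softRadial_le (norm_nonneg _)
  · have h₁ := integrable_smul_inner (V := 1) (C := 1) measurable_const (by simp)
      (f.memLp 2 volume) ((∂_{v} h).memLp 2)
    simpa using h₁.norm.const_mul ‖v‖

variable [CompleteSpace F]

lemma norm_morawetzForm_le_sobolevNorm_zero_mul_one (ε : ℝ) (y v : E) (f h : 𝓢(E, F)) :
    ‖morawetzForm ε y v f h‖ ≤ 2 * π * ‖v‖ ^ 2 * (sobolevNorm 0 f * sobolevNorm 1 h) :=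
  calc ‖morawetzForm ε y v f h‖ ≤ ‖v‖ * (sobolevNorm 0 f * sobolevNorm 0 (∂_{v} h)) :=
        norm_integral_smul_inner_le (norm_nonneg v) (fun _ => abs_softRadial_le) f (∂_{v} h)
    _ ≤ ‖v‖ * (sobolevNorm 0 f * (2 * π * ‖v‖ * sobolevNorm 1 h)) := by
        gcongr
        exacts [sobolevNorm_nonneg 0 f, sobolevNorm_zero_lineDerivOp_le v h]
    _ = 2 * π * ‖v‖ ^ 2 * (sobolevNorm 0 f * sobolevNorm 1 h) := by ring

lemma norm_morawetzForm_le_sobolevNorm_one_mul_zero (hE : 2 < Module.finrank ℝ E) (hε : ε ≠ 0)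
    (y v : E) (f h : 𝓢(E, F)) :
    ‖morawetzForm ε y v f h‖
      ≤ (2 * π + hardyConst E) * ‖v‖ ^ 2 * (sobolevNorm 1 f * sobolevNorm 0 h) := by
  let V' : E → ℝ := fun x => (‖v‖ ^ 2 - softRadial ε y v x ^ 2) * softInvDist ε y x
  have hV' (x : E) : |V' x| ≤ ‖v‖ ^ 2 * softInvDist ε y x := by
    rw [abs_mul, abs_of_nonneg softInvDist_nonneg, abs_of_nonneg (sub_nonneg.2 sq_softRadial_le)]
    exact mul_le_mul_of_nonneg_right (sub_le_self _ (sq_nonneg _)) softInvDist_nonneg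
  have hparts := integral_smul_inner_lineDerivOp (V := softRadial ε y v) (V' := V')
    measurable_softRadial
    (((measurable_softRadial.pow_const 2).const_sub _).mul measurable_softInvDist)
    (fun _ => abs_softRadial_le)
    (fun x => (hV' x).trans (mul_le_mul_of_nonneg_left (softInvDist_le hε) (sq_nonneg _)))
    (fun x => hasLineDerivAt_softRadial hε) f h
  have := sobolevNorm_nonneg 0 h
  calc ‖morawetzForm ε y v f h‖
      ≤ ‖∫ x, softRadial ε y v x • ⟪∂_{v} f x, h x⟫_ℂ‖ + ‖∫ x, V' x • ⟪f x, h x⟫_ℂ‖ := by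
        rw [morawetzForm, hparts, ← norm_neg (∫ x, softRadial ε y v x • ⟪∂_{v} f x, h x⟫_ℂ)]
        exact norm_sub_le _ _
    _ ≤ ‖v‖ * (sobolevNorm 0 (∂_{v} f) * sobolevNorm 0 h)
          + ‖v‖ ^ 2 * (hardyNorm ε y f * sobolevNorm 0 h) :=
        add_le_add
          (norm_integral_smul_inner_le (norm_nonneg v) (fun _ => abs_softRadial_le) (∂_{v} f) h)
          (norm_integral_smul_inner_le_hardyNorm hε (sq_nonneg _) hV' f h)
    _ ≤ ‖v‖ * (2 * π * ‖v‖ * sobolevNorm 1 f * sobolevNorm 0 h)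
          + ‖v‖ ^ 2 * (hardyConst E * sobolevNorm 1 f * sobolevNorm 0 h) := by
        gcongr
        exacts [sobolevNorm_zero_lineDerivOp_le v f, hardyNorm_le hE hε y f]
    _ = (2 * π + hardyConst E) * ‖v‖ ^ 2 * (sobolevNorm 1 f * sobolevNorm 0 h) := by ring

lemma norm_morawetzForm_self_sub_le (hE : 2 < Module.finrank ℝ E) (hε : ε ≠ 0) (y v : E)
    (f h : 𝓢(E, F)) :
    ‖morawetzForm ε y v f f - morawetzForm ε y v h h‖
      ≤ (2 * π + hardyConst E) * ‖v‖ ^ 2 * sobolevNorm 0 (f - h)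
        * (sobolevNorm 1 f + sobolevNorm 1 h) := by
  have hK : 0 ≤ hardyConst E := hardyConst_nonneg hE
  have := sobolevNorm_nonneg 0 (f - h)
  have := sobolevNorm_nonneg 1 f
  have hsplit : morawetzForm ε y v f f - morawetzForm ε y v h h
      = morawetzForm ε y v (f - h) f + morawetzForm ε y v h (f - h) := by
    rw [morawetzForm_sub_left, morawetzForm_sub_right]
    ring
  calc ‖morawetzForm ε y v f f - morawetzForm ε y v h h‖
      ≤ 2 * π * ‖v‖ ^ 2 * (sobolevNorm 0 (f - h) * sobolevNorm 1 f)
        + (2 * π + hardyConst E) * ‖v‖ ^ 2 * (sobolevNorm 1 h * sobolevNorm 0 (f - h)) := by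
        rw [hsplit]
        exact norm_add_le_of_le (norm_morawetzForm_le_sobolevNorm_zero_mul_one ε y v (f - h) f)
          (norm_morawetzForm_le_sobolevNorm_one_mul_zero hE hε y v h (f - h))
    _ ≤ (2 * π + hardyConst E) * ‖v‖ ^ 2 * (sobolevNorm 0 (f - h) * sobolevNorm 1 f)
        + (2 * π + hardyConst E) * ‖v‖ ^ 2 * (sobolevNorm 1 h * sobolevNorm 0 (f - h)) := by
        gcongr
        exact le_add_of_nonneg_right hK
    _ = _ := by ring

theorem norm_morawetzForm_self_le (hE : 2 < Module.finrank ℝ E) (ε : ℝ) (y v : E) (g : 𝓢(E, F)) :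
    ‖morawetzForm ε y v g g‖
      ≤ 6 * ((2 * π + hardyConst E) * ‖v‖ ^ 2) * sobolevNorm (1 / 2) g ^ 2 := by
  have hsoft (ε : ℝ) (hε : ε ≠ 0) : ‖morawetzForm ε y v g g‖
      ≤ 6 * ((2 * π + hardyConst E) * ‖v‖ ^ 2) * sobolevNorm (1 / 2) g ^ 2 :=
    norm_le_mul_sobolevNorm_half_sq (M := fun f => morawetzForm ε y v f f)
      (by have := hardyConst_nonneg hE; positivity) (by simp [morawetzForm])
      (norm_morawetzForm_self_sub_le hE hε y v) g
  have hclosed : IsClosed {ε : ℝ | ‖morawetzForm ε y v g g‖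
      ≤ 6 * ((2 * π + hardyConst E) * ‖v‖ ^ 2) * sobolevNorm (1 / 2) g ^ 2} :=
    isClosed_le (continuous_morawetzForm_softening y v g g).norm continuous_const
  exact hclosed.closure_subset_iff.2 hsoft (dense_compl_singleton (0 : ℝ) ε)

end MorawetzForm

section MorawetzAction

/-- The Morawetz action centred at `y`: the mass current `Im ⟪g, ∇g⟫` tested against the unit vector
field `(x - y) / |x - y|`. -/
def morawetzAction (g : 𝓢(E, F)) (y : E) : ℝ :=
  ∫ x, (⟪g x, fderiv ℝ g x (‖x - y‖⁻¹ • (x - y))⟫_ℂ).im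

lemma morawetzAction_eq_sum_morawetzForm {ι : Type*} [Fintype ι] (b : OrthonormalBasis ι ℝ E)
    (g : 𝓢(E, F)) (y : E) :
    morawetzAction g y = ∑ i, (morawetzForm 0 y (b i) g g).im := by
  have hexpand (x : E) : ⟪g x, fderiv ℝ g x (‖x - y‖⁻¹ • (x - y))⟫_ℂ
      = ∑ i, softRadial 0 y (b i) x • ⟪g x, ∂_{b i} g x⟫_ℂ := by
    have hxy : ‖x - y‖⁻¹ • (x - y) = ∑ i, softRadial 0 y (b i) x • b i := by
      simp only [softRadial, softInvDist_zero, mul_comm _ ‖x - y‖⁻¹, mul_smul,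
        ← Finset.smul_sum, real_inner_comm (b _), b.sum_repr']
    simp only [hxy, map_sum, map_smul, inner_sum, inner_smul_right_eq_smul,
      SchwartzMap.lineDerivOp_apply_eq_fderiv]
  have hint (i : ι) := integrable_morawetzForm 0 y (b i) g g
  rw [← Complex.im_sum]
  simp only [morawetzForm, morawetzAction]
  rw [← integral_finsetSum _ fun i _ => hint i, ← Complex.imCLM_apply,
    ← ContinuousLinearMap.integral_comp_comm _ (integrable_finsetSum _ fun i _ => hint i)]
  simp only [hexpand, Complex.imCLM_apply]

variable [CompleteSpace F]

lemma abs_morawetzAction_le (hE : 2 < Module.finrank ℝ E) (g : 𝓢(E, F)) (y : E) :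
    |morawetzAction g y|
      ≤ Module.finrank ℝ E * (6 * (2 * π + hardyConst E)) * sobolevNorm (1 / 2) g ^ 2 := by
  let b := stdOrthonormalBasis ℝ E
  calc |morawetzAction g y| ≤ ∑ i, |(morawetzForm 0 y (b i) g g).im| := by
        rw [morawetzAction_eq_sum_morawetzForm b]
        exact Finset.abs_sum_le_sum_abs _ _
    _ ≤ ∑ i, 6 * ((2 * π + hardyConst E) * ‖b i‖ ^ 2) * sobolevNorm (1 / 2) g ^ 2 :=
        Finset.sum_le_sum fun i _ =>
          (Complex.abs_im_le_norm _).trans (norm_morawetzForm_self_le hE 0 y (b i) g)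
    _ = _ := by simp [b.norm_eq_one, mul_assoc]

theorem interaction_potential_bound_general (hE : 2 < Module.finrank ℝ E) :
    ∃ C > (0 : ℝ), ∀ g : 𝓢(E, F),
      |∫ y, ‖g y‖ ^ 2 * morawetzAction g y|
        ≤ C * (∫ x, ‖g x‖ ^ 2) * sobolevNorm (1 / 2) g ^ 2 := by
  have : (0 : ℝ) < Module.finrank ℝ E := by exact_mod_cast two_pos.trans hE
  have hK := hardyConst_nonneg hE
  refine ⟨Module.finrank ℝ E * (6 * (2 * π + hardyConst E)), by positivity, fun g => ?_⟩
  have hmass : Integrable fun y => ‖g y‖ ^ 2 := (g.memLp 2).integrable_norm_pow two_ne_zero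
  calc |∫ y, ‖g y‖ ^ 2 * morawetzAction g y|
      ≤ ∫ y, ‖g y‖ ^ 2 * (Module.finrank ℝ E * (6 * (2 * π + hardyConst E))
          * sobolevNorm (1 / 2) g ^ 2) := by
        rw [← Real.norm_eq_abs]
        refine norm_integral_le_of_norm_le (hmass.mul_const _) (ae_of_all _ fun y => ?_)
        rw [norm_mul, Real.norm_of_nonneg (sq_nonneg _)]
        exact mul_le_mul_of_nonneg_left (abs_morawetzAction_le hE g y) (sq_nonneg _)
    _ = _ := by rw [integral_mul_const]; ring

end MorawetzAction

section Euclidean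

lemma morAction_eq_morawetzAction (g : 𝓢(E3, ℂ)) (y : E3) :
    morAction g y = morawetzAction g y := by
  refine integral_congr_ae (ae_of_all _ fun x => ?_)
  have hxy : x - y = ∑ i, (x i - y i) • e3 i := by
    simpa [e3] using ((EuclideanSpace.basisFun (Fin 3) ℝ).sum_repr (x - y)).symm
  have hterm (i : Fin 3) : massCur g i x * ((x i - y i) / ‖x - y‖)
      = ‖x - y‖⁻¹ * ((x i - y i) * (⟪g x, fderiv ℝ g x (e3 i)⟫_ℂ).im) := by
    rw [massCur, pd, RCLike.inner_apply, mul_comm (starRingEnd ℂ (g x))]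
    ring
  have hgrad : (⟪g x, fderiv ℝ g x (x - y)⟫_ℂ).im
      = ∑ i, (x i - y i) * (⟪g x, fderiv ℝ g x (e3 i)⟫_ℂ).im := by
    conv_lhs => rw [hxy]
    simp only [map_sum, map_smul, inner_sum, inner_smul_right_eq_smul, Complex.im_sum,
      Complex.smul_im, smul_eq_mul]
  simp only [hterm, ← Finset.mul_sum, ← hgrad, map_smul, inner_smul_right_eq_smul,
    Complex.smul_im, smul_eq_mul]

lemma sobSq_eq_sobolevNorm_sq (σ : ℝ) (g : 𝓢(E3, ℂ)) : sobSq σ g = sobolevNorm σ g ^ 2 := by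
  rw [sobolevNorm_sq, sobSq]
  congr! 2 with ξ
  rw [mul_pow, ← Real.rpow_mul_natCast (norm_nonneg ξ), mul_comm 2 σ, SchwartzMap.fourier_coe]
  norm_cast

end Euclidean

/-- There is `C > 0` so that for every Schwartz `g : ℝ³ → ℂ`, the
Morawetz interaction potential `∫ |g(y)|² M_y[g] dy` is bounded by
`C ‖g‖²_{L²} ‖g‖²_{Ḣ^{1/2}}`. -/
theorem interaction_potential_bound :
    ∃ C > (0:ℝ), ∀ g : SchwartzMap E3 ℂ,
      |∫ y : E3, Complex.normSq (g y) * morAction (fun x => g x) y|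
        ≤ C * (∫ x : E3, Complex.normSq (g x)) * sobSq (1/2) (fun x => g x) := by
  simpa only [Complex.normSq_eq_norm_sq, morAction_eq_morawetzAction, sobSq_eq_sobolevNorm_sq]
    using interaction_potential_bound_general (E := E3) (F := ℂ) (by simp)
end
end
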